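/- arXiv:math/0311467 — 3 statements merged into one kernel-verified Lean document; each statement's English description precedes it below -/
import Mathlib

section
/- Assume additionally that c_j ≠ c for all 1 < j < l. Set r := #{i : c_i > c} and s := (Σ_{i : c_i ≤ c} c_i) − 2c. Then the Benlolo–Sanderson element f is a greatest common divisor of the (s+c)×(s+c) minors of the matrix power 𝒳^{r+1}: f divides the determinant of every square submatrix of 𝒳^{r+1} obtained by choosing s+c rows and s+c columns, and every polynomial g ∈ R that divides all of these minors divides f. -/
open Finset MvPolynomial

noncomputable section

/-- Sum of the first `j` block sizes (blocks are 1-indexed). -/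
def blkSum (c : ℕ → ℕ) (j : ℕ) : ℕ := ∑ i ∈ Finset.Icc 1 j, c i

/-- Block index of `a ∈ {1,…,n}`: the least `j` with `a ≤ c 1 + ⋯ + c j`. -/
def blk (c : ℕ → ℕ) (a : ℕ) : ℕ := sInf {j | a ≤ blkSum c j}

/-- The index set `P` of positions of the nilradical `m`: pairs `(a, b)` of indices
(0-indexed here, representing the 1-indexed pair `(a+1, b+1)`) with `b < a` and
`blk (b+1) < blk (a+1)`. -/
abbrev Pos (c : ℕ → ℕ) (n : ℕ) : Type :=
  {p : Fin n × Fin n // p.2 < p.1 ∧ blk c (p.2.1 + 1) < blk c (p.1.1 + 1)}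

/-- The generic matrix `𝒳` of the nilradical `m`. -/
def genX (c : ℕ → ℕ) (n : ℕ) : Matrix (Fin n) (Fin n) (MvPolynomial (Pos c n) ℂ) :=
  Matrix.of fun a b =>
    if h : b < a ∧ blk c (b.1 + 1) < blk c (a.1 + 1) then X (⟨(a, b), h⟩ : Pos c n) else 0

/-- The matrix `M(t)`: the `(n-c) × (n-c)` submatrix of `𝒳 + t · Id` consisting of
rows `c+1, …, n` and columns `1, …, n-c`, viewed over `R[t]`.  Here `m = n - c`. -/
def Mmat (c : ℕ → ℕ) (n m : ℕ) (h : m + c 1 = n) :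
    Matrix (Fin m) (Fin m) (Polynomial (MvPolynomial (Pos c n) ℂ)) :=
  Matrix.of fun i j =>
    Polynomial.C (genX c n (Fin.cast h (i.addNat (c 1)))
        (Fin.castLE (le_trans (Nat.le_add_right m (c 1)) (le_of_eq h)) j))
      + if (Fin.cast h (i.addNat (c 1)) : Fin n)
            = Fin.castLE (le_trans (Nat.le_add_right m (c 1)) (le_of_eq h)) j
        then Polynomial.X else 0

/-- `d := Σᵢ max (cᵢ - c, 0)` (truncated subtraction). -/
def dBS (c : ℕ → ℕ) (l : ℕ) : ℕ := ∑ i ∈ Finset.Icc 1 l, (c i - c 1)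

/-- The Benlolo–Sanderson element: the coefficient of `t^d` in `det M(t)`. -/
def BSf (c : ℕ → ℕ) (l n m : ℕ) (h : m + c 1 = n) : MvPolynomial (Pos c n) ℂ :=
  ((Mmat c n m h).det).coeff (dBS c l)

/-- The point of the nilradical determined by `ξ : P → ℂ`. -/
def Xpt (c : ℕ → ℕ) (n : ℕ) (ξ : Pos c n → ℂ) : Matrix (Fin n) (Fin n) ℂ :=
  Matrix.of fun a b =>
    if h : b < a ∧ blk c (b.1 + 1) < blk c (a.1 + 1) then ξ ⟨(a, b), h⟩ else 0

/-!
Call a block *marked* if it has at least `c` elements, and let `1 = b 0 < ⋯ < b (r + 1) = l` be the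
marked blocks. Expanding a minor of `𝒳 ^ (r + 1)` by Cauchy–Binet gives a sum over chains of index
sets. Since `𝒳` is strictly block lower triangular, a chain with `s + c` elements per set can only
contribute if it is as full as possible around every marked block, and then each of its minors is
block triangular. Hence the minor with rows `I` and columns `J` is either zero or a product
`lowerFactor · middleFactor · upperFactor`, in which the first factor depends only on `I`, the last
one only on `J`, and the middle one is the same for all `I` and `J`. Expanding `det M(t)` shows that
the middle factor is `± f`.

It remains to see that the lower factors of the various `I` have no common divisor, and neither do
the upper factors, which are lower factors of the transposed matrix. A common divisor of the lower
factors is homogeneous for the grading of the polynomial ring by rows and columns, so if it is not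
constant it vanishes once a suitable row of `𝒳` is set to zero. But for every row there is a point,
given by a family of partial permutation matrices moving the indices along tracks which avoid that
row, at which some lower factor is nonzero.
-/

section Minors

variable {α R : Type*} [LinearOrder α] [CommRing R]

/-- The minor of `Y` with row set `A` and column set `B`, both listed increasingly; it is `0` when
`A` and `B` have different cardinalities. -/
def minor (Y : Matrix α α R) (A B : Finset α) : R :=
  if h : #B = #A then (Y.submatrix (A.orderEmbOfFin rfl) (B.orderEmbOfFin h)).det else 0

theorem minor_of_card_ne (Y : Matrix α α R) {A B : Finset α} (h : #B ≠ #A) :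
    minor Y A B = 0 := by
  simp [minor, h]

theorem minor_eq_det (Y : Matrix α α R) {k : ℕ} {A B : Finset α} (hA : #A = k) (hB : #B = k) :
    minor Y A B = (Y.submatrix (A.orderEmbOfFin hA) (B.orderEmbOfFin hB)).det := by
  subst hA
  simp [minor, hB]

theorem minor_image (Y : Matrix α α R) {k : ℕ} {ρ κ : Fin k → α} (hρ : StrictMono ρ)
    (hκ : StrictMono κ) : minor Y (univ.image ρ) (univ.image κ) = (Y.submatrix ρ κ).det := by
  have card_image {f : Fin k → α} (hf : StrictMono f) : #(univ.image f) = k := by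
    simp [card_image_of_injective _ hf.injective]
  rw [minor_eq_det Y (card_image hρ) (card_image hκ),
    ← orderEmbOfFin_unique (card_image hρ) (by simp) hρ,
    ← orderEmbOfFin_unique (card_image hκ) (by simp) hκ]

theorem minor_transpose (Y : Matrix α α R) (A B : Finset α) :
    minor Y.transpose A B = minor Y B A := by
  by_cases h : #B = #A
  · rw [minor_eq_det _ rfl h, minor_eq_det _ h rfl, ← Matrix.det_transpose]
    rfl
  · rw [minor_of_card_ne _ h, minor_of_card_ne _ (Ne.symm h)]

theorem map_minor {S : Type*} [CommRing S] (φ : R →+* S) (Y : Matrix α α R) (A B : Finset α) :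
    φ (minor Y A B) = minor (Y.map φ) A B := by
  unfold minor
  split_ifs
  · rw [RingHom.map_det]
    rfl
  · exact map_zero φ

theorem minor_empty (Y : Matrix α α R) : minor Y ∅ ∅ = 1 := by
  rw [minor_eq_det Y (k := 0) rfl rfl, Matrix.det_fin_zero]

theorem minor_eq_zero_of_card_lt (Y : Matrix α α R) {A B S T : Finset α} (hSA : S ⊆ A)
    (hY : ∀ a ∈ S, ∀ b ∈ B, b ∉ T → Y a b = 0) (hcard : #T < #S) : minor Y A B = 0 := by
  by_cases h : #B = #A
  swap
  · exact minor_of_card_ne _ h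
  rw [minor_eq_det _ rfl h, ← Matrix.det_transpose, Matrix.det_apply]
  refine sum_eq_zero fun σ _ => ?_
  -- The column that `σ` assigns to the row `a` is `col a`; it cannot lie in `T` for all `a ∈ S`.
  let col (i : Fin #A) : α := B.orderEmbOfFin h (σ i)
  obtain ⟨i, hiS, hiT⟩ : ∃ i, A.orderEmbOfFin rfl i ∈ S ∧ col i ∉ T := by
    by_contra! hT
    refine hcard.not_ge ?_
    calc #S = #(univ.filter fun i => A.orderEmbOfFin rfl i ∈ S) := by
          rw [← card_map (A.orderEmbOfFin rfl).toEmbedding]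
          congr 1
          ext x
          constructor
          · intro hx
            obtain ⟨i, rfl⟩ : x ∈ Set.range (A.orderEmbOfFin rfl) := by simpa using hSA hx
            simpa using hx
          · simp only [mem_map, mem_filter, mem_univ, true_and]
            rintro ⟨i, hi, rfl⟩
            exact hi
      _ ≤ #T := card_le_card_of_injOn col (fun i hi => hT i (by simpa using hi))
          ((B.orderEmbOfFin h).injective.comp σ.injective).injOn
  rw [prod_eq_zero (mem_univ i), smul_zero]
  exact hY _ hiS _ (orderEmbOfFin_mem B h _) hiT

theorem minor_one_self (A : Finset α) : minor (1 : Matrix α α R) A A = 1 := by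
  rw [minor_eq_det _ rfl rfl, Matrix.submatrix_one _ (A.orderEmbOfFin rfl).injective,
    Matrix.det_one]

theorem minor_one_of_ne {A B : Finset α} (h : A ≠ B) : minor (1 : Matrix α α R) A B = 0 := by
  by_cases hcard : #B = #A
  swap
  · exact minor_of_card_ne _ hcard
  have hAB : ¬ A ⊆ B := fun hAB => h (eq_of_subset_of_card_le hAB hcard.le)
  refine minor_eq_zero_of_card_lt (S := A \ B) (T := ∅) _ sdiff_subset (fun a ha b hb _ => ?_) ?_
  · exact Matrix.one_apply_ne fun hab => (mem_sdiff.mp ha).2 (hab ▸ hb)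
  · simpa [card_pos, sdiff_nonempty] using hAB

theorem strictMono_append {k j : ℕ} {f : Fin k → α} {g : Fin j → α} (hf : StrictMono f)
    (hg : StrictMono g) (hfg : ∀ i i', f i < g i') : StrictMono (Fin.append f g) := by
  intro i i'
  refine Fin.addCases (fun i => ?_) (fun i => ?_) i <;>
    refine Fin.addCases (fun i' => ?_) (fun i' => ?_) i' <;>
    simp only [Fin.append_left, Fin.append_right, Fin.lt_def, Fin.val_castAdd, Fin.val_natAdd]
  · exact fun h => hf h
  · exact fun _ => hfg i i'
  · omega
  · exact fun h => hg (Fin.lt_def.mpr (by omega))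

theorem image_append {k j : ℕ} (f : Fin k → α) (g : Fin j → α) :
    univ.image (Fin.append f g) = univ.image f ∪ univ.image g := by
  ext x
  simp [finSumFinEquiv.surjective.exists]

theorem orderEmbOfFin_union {A₁ A₂ : Finset α} (hlt : ∀ x ∈ A₁, ∀ y ∈ A₂, x < y) {k j : ℕ}
    (h₁ : #A₁ = k) (h₂ : #A₂ = j) (h : #(A₁ ∪ A₂) = k + j) :
    ((A₁ ∪ A₂).orderEmbOfFin h : Fin (k + j) → α) =
      Fin.append (A₁.orderEmbOfFin h₁) (A₂.orderEmbOfFin h₂) := by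
  have hmono := strictMono_append (A₁.orderEmbOfFin h₁).strictMono (A₂.orderEmbOfFin h₂).strictMono
    fun i i' => hlt _ (orderEmbOfFin_mem A₁ h₁ i) _ (orderEmbOfFin_mem A₂ h₂ i')
  refine (orderEmbOfFin_unique h (fun i => ?_) hmono).symm
  refine Fin.addCases (fun i => ?_) (fun i => ?_) i
  · simp [orderEmbOfFin_mem A₁ h₁ i]
  · simp [orderEmbOfFin_mem A₂ h₂ i]

theorem minor_union (Y : Matrix α α R) {A₁ A₂ B₁ B₂ : Finset α} (hA : ∀ x ∈ A₁, ∀ y ∈ A₂, x < y)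
    (hB : ∀ x ∈ B₁, ∀ y ∈ B₂, x < y) (hY : ∀ a ∈ A₁, ∀ b ∈ B₂, Y a b = 0) (hcard : #B₁ = #A₁) :
    minor Y (A₁ ∪ A₂) (B₁ ∪ B₂) = minor Y A₁ B₁ * minor Y A₂ B₂ := by
  have card_union {C₁ C₂ : Finset α} (hC : ∀ x ∈ C₁, ∀ y ∈ C₂, x < y) :
      #(C₁ ∪ C₂) = #C₁ + #C₂ :=
    card_union_of_disjoint (disjoint_left.mpr fun x h₁ h₂ => lt_irrefl x (hC x h₁ x h₂))
  by_cases hcard₂ : #B₂ = #A₂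
  swap
  · rw [minor_of_card_ne Y hcard₂, mul_zero, minor_of_card_ne]
    rw [card_union hA, card_union hB]
    omega
  have hBcard : #(B₁ ∪ B₂) = #A₁ + #A₂ := by rw [card_union hB, hcard, hcard₂]
  rw [minor_eq_det Y (card_union hA) hBcard, minor_eq_det _ rfl hcard, minor_eq_det _ rfl hcard₂,
    orderEmbOfFin_union hA rfl rfl, orderEmbOfFin_union hB hcard hcard₂,
    ← Matrix.det_submatrix_equiv_self finSumFinEquiv,
    ← Matrix.det_fromBlocks_zero₁₂ _ (Y.submatrix (A₂.orderEmbOfFin rfl) (B₁.orderEmbOfFin hcard))]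
  congr 1
  ext (i | i) (j | j)
  · simp
  · simpa using hY _ (orderEmbOfFin_mem A₁ rfl i) _ (orderEmbOfFin_mem B₂ hcard₂ j)
  · simp
  · simp

end Minors

section CauchyBinet

variable {α R : Type*} [CommRing R]

theorem det_mul_eq_sum_det_submatrix [Fintype α] {k : ℕ} (P : Matrix (Fin k) α R)
    (Q : Matrix α (Fin k) R) :
    (P * Q).det = ∑ g : Fin k → α, (∏ i, P i (g i)) * (Q.submatrix g id).det := by
  have hrows : P * Q = fun i => ∑ a, P i a • Q a := by
    ext i j
    simp [Matrix.mul_apply, Finset.sum_apply]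
  change Matrix.detRowAlternating.toMultilinearMap (P * Q) = _
  rw [hrows, MultilinearMap.map_sum]
  exact sum_congr rfl fun g _ => MultilinearMap.map_smul_univ _ _ _

theorem det_submatrix_mul_det_submatrix_eq_sum_perm {k : ℕ} (P : Matrix (Fin k) α R)
    (Q : Matrix α (Fin k) R) (f : Fin k → α) :
    (P.submatrix id f).det * (Q.submatrix f id).det =
      ∑ σ : Equiv.Perm (Fin k), (∏ i, P i (f (σ i))) * (Q.submatrix (f ∘ σ) id).det := by
  rw [← Matrix.det_transpose, Matrix.det_apply', sum_mul]
  refine sum_congr rfl fun σ _ => ?_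
  rw [show Q.submatrix (f ∘ σ) id = (Q.submatrix f id).submatrix σ id from rfl,
    Matrix.det_permute σ (Q.submatrix f id)]
  simp only [Matrix.transpose_apply, Matrix.submatrix_apply, id]
  ring

theorem exists_perm_orderEmbOfFin_image [LinearOrder α] {k : ℕ} {g : Fin k → α}
    (hg : Function.Injective g) :
    ∃ (h : #(univ.image g) = k) (σ : Equiv.Perm (Fin k)),
      (univ.image g).orderEmbOfFin h ∘ σ = g := by
  have h : #(univ.image g) = k := by simp [card_image_of_injective _ hg]
  have hmem (i : Fin k) : ∃ j, (univ.image g).orderEmbOfFin h j = g i := by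
    change g i ∈ Set.range ((univ.image g).orderEmbOfFin h)
    simp
  choose σ hσ using hmem
  have hσ' : Function.Injective σ := fun i j hij => hg (by rw [← hσ i, ← hσ j, hij])
  exact ⟨h, Equiv.ofBijective σ (Finite.injective_iff_bijective.mp hσ'), funext hσ⟩

variable [LinearOrder α] [Fintype α]

theorem det_mul_eq_sum_orderEmbOfFin {k : ℕ} (P : Matrix (Fin k) α R) (Q : Matrix α (Fin k) R) :
    (P * Q).det = ∑ C : {C : Finset α // #C = k},
      (P.submatrix id (C.1.orderEmbOfFin C.2)).det *
        (Q.submatrix (C.1.orderEmbOfFin C.2) id).det := by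
  simp_rw [det_mul_eq_sum_det_submatrix, det_submatrix_mul_det_submatrix_eq_sum_perm]
  let e (x : (_ : {C : Finset α // #C = k}) × Equiv.Perm (Fin k)) : Fin k → α :=
    x.1.1.orderEmbOfFin x.1.2 ∘ x.2
  let term (g : Fin k → α) : R := (∏ i, P i (g i)) * (Q.submatrix g id).det
  refine Eq.trans ?_ (Fintype.sum_sigma fun x => term (e x))
  symm
  refine sum_bij_ne_zero (fun x _ _ => e x) (by simp) ?_ ?_ (fun _ _ _ => rfl)
  · rintro ⟨⟨C, hC⟩, σ⟩ - - ⟨⟨C', hC'⟩, σ'⟩ - - hee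
    have hrange {D : Finset α} (hD : #D = k) (τ : Equiv.Perm (Fin k)) :
        Set.range (e ⟨⟨D, hD⟩, τ⟩) = D := by
      rw [τ.surjective.range_comp, range_orderEmbOfFin]
    obtain rfl : C = C' := by
      rw [← coe_inj, ← hrange hC σ, ← hrange hC' σ', hee]
    obtain rfl : σ = σ' := by
      exact Equiv.ext fun i => by simpa [e] using congrFun hee i
    rfl
  · intro g _ hg
    have hinj : Function.Injective g := by
      refine fun i j hij => by_contra fun hne => hg ?_
      rw [Matrix.det_zero_of_row_eq hne (by ext; simp [hij]), mul_zero]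
    obtain ⟨hC, σ, hσ⟩ := exists_perm_orderEmbOfFin_image hinj
    exact ⟨⟨⟨_, hC⟩, σ⟩, mem_univ _, by simpa only [e, hσ] using hg, hσ⟩

theorem minor_mul (Y Z : Matrix α α R) (A B : Finset α) :
    minor (Y * Z) A B = ∑ C, minor Y A C * minor Z C B := by
  by_cases h : #B = #A
  swap
  · rw [minor_of_card_ne _ h, sum_eq_zero fun C _ => ?_]
    by_cases hC : #C = #A
    · rw [minor_of_card_ne Z (hC ▸ h), mul_zero]
    · rw [minor_of_card_ne Y hC, zero_mul]
  have hsupport : ∀ C ∈ univ, minor Y A C * minor Z C B ≠ 0 → #C = #A := fun C _ hne =>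
    by_contra fun hC => hne (by rw [minor_of_card_ne Y hC, zero_mul])
  rw [minor_eq_det _ rfl h, ← Matrix.submatrix_mul_equiv _ _ _ (Equiv.refl α),
    det_mul_eq_sum_orderEmbOfFin, ← sum_filter_of_ne hsupport,
    sum_subtype (p := fun C : Finset α => #C = #A) _ (by simp)]
  refine sum_congr rfl fun C _ => ?_
  rw [minor_eq_det Y rfl C.2, minor_eq_det Z C.2 h]
  rfl

end CauchyBinet

theorem sum_powerset_union {α M : Type*} [DecidableEq α] [AddCommMonoid M] {S T : Finset α}
    (hST : Disjoint S T) (F : Finset α → M) :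
    ∑ C ∈ (S ∪ T).powerset, F C = ∑ A ∈ S.powerset, ∑ B ∈ T.powerset, F (A ∪ B) := by
  rw [← sum_product']
  symm
  refine sum_nbij' (fun p => p.1 ∪ p.2) (fun C => (C ∩ S, C ∩ T)) ?_ ?_ ?_ ?_ fun _ _ => rfl
  · simp only [mem_product, mem_powerset]
    exact fun p hp => union_subset_union hp.1 hp.2
  · simp [inter_subset_right]
  · rintro ⟨A, B⟩ hAB
    simp only [mem_product, mem_powerset] at hAB
    have hA : (A ∪ B) ∩ S = A := by grind [disjoint_left]
    have hB : (A ∪ B) ∩ T = B := by grind [disjoint_left]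
    rw [hA, hB]
  · intro C hC
    rw [← inter_union_distrib_left, inter_eq_left.mpr (mem_powerset.mp hC)]

section Levels

variable {α Λ : Type*} [Fintype α] [LinearOrder Λ]

/-- The indices of level less than `i`. -/
def below (β : α → Λ) (i : Λ) : Finset α := {x | β x < i}

/-- The indices of level `i`. -/
def layer (β : α → Λ) (i : Λ) : Finset α := {x | β x = i}

/-- The indices of level greater than `i`. -/
def above (β : α → Λ) (i : Λ) : Finset α := {x | i < β x}

/-- The indices whose level lies strictly between the consecutive marked levels `b k` and
`b (k + 1)`. -/
def gap (β : α → Λ) (b : ℕ → Λ) (k : ℕ) : Finset α := {x | b k < β x ∧ β x < b (k + 1)}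

/-- The number of indices in the first `k` gaps. -/
def gapCard (β : α → Λ) (b : ℕ → Λ) (k : ℕ) : ℕ := ∑ j ∈ range k, #(gap β b j)

variable {β : α → Λ} {b : ℕ → Λ} {k : ℕ} {i : Λ} {x : α}

@[simp, grind =] theorem mem_below : x ∈ below β i ↔ β x < i := by simp [below]

@[simp, grind =] theorem mem_layer : x ∈ layer β i ↔ β x = i := by simp [layer]

@[simp, grind =] theorem mem_above : x ∈ above β i ↔ i < β x := by simp [above]

@[simp, grind =] theorem mem_gap : x ∈ gap β b k ↔ b k < β x ∧ β x < b (k + 1) := by simp [gap]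

theorem gapCard_succ (β : α → Λ) (b : ℕ → Λ) (k : ℕ) :
    gapCard β b (k + 1) = gapCard β b k + #(gap β b k) :=
  sum_range_succ _ _

theorem disjoint_below_layer (β : α → Λ) (i : Λ) : Disjoint (below β i) (layer β i) := by
  grind [disjoint_left]

variable [DecidableEq α]

theorem below_union_layer_union_above (β : α → Λ) (i : Λ) :
    below β i ∪ layer β i ∪ above β i = univ := by
  ext x
  simpa [or_assoc] using lt_trichotomy (β x) i

theorem below_union_layer_union_gap (hb : b k < b (k + 1)) :
    below β (b k) ∪ layer β (b k) ∪ gap β b k = below β (b (k + 1)) := by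
  grind

theorem card_inter_below_succ (hb : b k < b (k + 1)) (C : Finset α) :
    #(C ∩ below β (b (k + 1))) =
      #(C ∩ below β (b k)) + #(C ∩ layer β (b k)) + #(C ∩ gap β b k) := by
  rw [← below_union_layer_union_gap hb, inter_union_distrib_left, inter_union_distrib_left,
    card_union_of_disjoint (by grind [disjoint_left]),
    card_union_of_disjoint (by grind [disjoint_left])]

theorem gapCard_eq_card_inter_below (hb : ∀ j < k, b j < b (j + 1)) (hb₀ : ∀ x, b 0 ≤ β x)
    {C : Finset α} (hgap : ∀ j < k, gap β b j ⊆ C)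
    (hlayer : ∀ j < k, Disjoint C (layer β (b j))) :
    gapCard β b k = #(C ∩ below β (b k)) := by
  induction k with
  | zero =>
    have hbelow : below β (b 0) = ∅ := by
      ext x
      simp [(hb₀ x).not_gt]
    simp [gapCard, hbelow]
  | succ k ih =>
    rw [gapCard_succ, card_inter_below_succ (hb k k.lt_succ_self),
      disjoint_iff_inter_eq_empty.mp (hlayer k k.lt_succ_self),
      inter_eq_right.mpr (hgap k k.lt_succ_self), card_empty, add_zero,
      ih (fun j hj => hb j (by omega)) (fun j hj => hgap j (by omega))
        fun j hj => hlayer j (by omega)]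

theorem sum_powerset_below_succ {M : Type*} [AddCommMonoid M] (hb : b k < b (k + 1))
    (F : Finset α → M) :
    ∑ C ∈ (below β (b (k + 1))).powerset, F C = ∑ L ∈ (below β (b k)).powerset,
      ∑ E ∈ (layer β (b k)).powerset, ∑ A ∈ (gap β b k).powerset, F (L ∪ E ∪ A) := by
  rw [← below_union_layer_union_gap hb, sum_powerset_union (by grind [disjoint_left]),
    sum_powerset_union (disjoint_below_layer β _)]

theorem sum_eq_sum_below_layer_above {M : Type*} [AddCommMonoid M] (β : α → Λ) (i : Λ)
    (F : Finset α → M) :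
    ∑ C, F C = ∑ L ∈ (below β i).powerset, ∑ E ∈ (layer β i).powerset,
      ∑ A ∈ (above β i).powerset, F (L ∪ E ∪ A) := by
  rw [← powerset_univ, ← below_union_layer_union_above β i,
    sum_powerset_union (by grind [disjoint_left]), sum_powerset_union (disjoint_below_layer β i)]

end Levels

section Factors

variable {α Λ R : Type*} [LinearOrder α] [LinearOrder Λ] [CommRing R] {Y : Matrix α α R}
  {β : α → Λ} {b : ℕ → Λ} {k : ℕ}

theorem minor_union_of_level (hβ : Monotone β) (hY : ∀ x y, β x ≤ β y → Y x y = 0) (i : Λ)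
    {A₁ A₂ B₁ B₂ : Finset α} (hA₁ : ∀ x ∈ A₁, β x ≤ i) (hA₂ : ∀ x ∈ A₂, i < β x)
    (hB₁ : ∀ x ∈ B₁, β x < i) (hB₂ : ∀ x ∈ B₂, i ≤ β x) (hcard : #B₁ = #A₁) :
    minor Y (A₁ ∪ A₂) (B₁ ∪ B₂) = minor Y A₁ B₁ * minor Y A₂ B₂ :=
  minor_union Y (fun x hx y hy => hβ.reflect_lt ((hA₁ x hx).trans_lt (hA₂ y hy)))
    (fun x hx y hy => hβ.reflect_lt ((hB₁ x hx).trans_le (hB₂ y hy)))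
    (fun x hx y hy => hY x y ((hA₁ x hx).trans (hB₂ y hy))) hcard

variable [Fintype α]

/-- The factor of a minor of `Y ^ k` contributed by its rows `A` of level below `b k`, once those
rows are as numerous as the minor allows. -/
def lowerFactor (Y : Matrix α α R) (β : α → Λ) (b : ℕ → Λ) : ℕ → Finset α → R
  | 0, A => if A = ∅ then 1 else 0
  | k + 1, A => ∑ L ∈ (below β (b k)).powerset, if gap β b k ⊆ A then
      minor Y (A \ gap β b k) L * lowerFactor Y β b k L else 0

/-- The factor of a minor of `Y ^ k` contributed by its rows `E` of level `b k`, once these and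
the rows of lower level are as numerous as the minor allows. -/
def middleFactor (Y : Matrix α α R) (β : α → Λ) (b : ℕ → Λ) : ℕ → Finset α → R
  | 0, E => if E = layer β (b 0) then 1 else 0
  | k + 1, E => ∑ E' ∈ (layer β (b k)).powerset,
      minor Y (gap β b k ∪ E) (E' ∪ gap β b k) * middleFactor Y β b k E'

/-- The factor of a minor of `Y ^ k` with columns `J` contributed by its rows `A` of level above
`b k`, once the rows of lower level are as numerous as the minor allows. -/
def upperFactor (Y : Matrix α α R) (β : α → Λ) (b : ℕ → Λ) (J : Finset α) : ℕ → Finset α → R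
  | 0, A => if layer β (b 0) ∪ A = J then 1 else 0
  | k + 1, A => ∑ A' ∈ (above β (b k)).powerset, if gap β b k ⊆ A' then
      minor Y A (A' \ gap β b k) * upperFactor Y β b J k A' else 0

theorem card_inter_below_add_card_inter_layer_le (hY : ∀ x y, β x ≤ β y → Y x y = 0)
    {A B : Finset α} (h : minor Y A B ≠ 0) (i : Λ) :
    #(A ∩ below β i) + #(A ∩ layer β i) ≤ #(B ∩ below β i) := by
  contrapose! h
  rw [← card_union_of_disjoint (by grind [disjoint_left]), ← inter_union_distrib_left] at h
  exact minor_eq_zero_of_card_lt Y inter_subset_left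
    (fun x hx y hy hyB => hY x y (by grind)) h

theorem card_inter_le_of_minor_pow_ne_zero (hY : ∀ x y, β x ≤ β y → Y x y = 0)
    (hb : ∀ j < k, b j < b (j + 1)) (hb₀ : ∀ x, b 0 ≤ β x) {C J : Finset α}
    (h : minor (Y ^ k) C J ≠ 0) :
    #(C ∩ below β (b k)) ≤ gapCard β b k ∧
      #(C ∩ below β (b k)) + #(C ∩ layer β (b k)) ≤ gapCard β b k + #(layer β (b 0)) := by
  induction k generalizing C with
  | zero =>
    have hbelow : C ∩ below β (b 0) = ∅ := by
      ext x
      simp [(hb₀ x).not_gt]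
    have := card_le_card (inter_subset_right (s₁ := C) (s₂ := layer β (b 0)))
    simp [hbelow, this, gapCard]
  | succ k ih =>
    rw [pow_succ', minor_mul] at h
    obtain ⟨D, -, hD⟩ := exists_ne_zero_of_sum_ne_zero h
    obtain ⟨ih₁, ih₂⟩ := ih (fun j hj => hb j (by omega)) (right_ne_zero_of_mul hD)
    have hCD := card_inter_below_add_card_inter_layer_le hY (left_ne_zero_of_mul hD)
    have hCD₁ := hCD (b k)
    have hCD₂ := hCD (b (k + 1))
    have hC := card_inter_below_succ (β := β) (hb k k.lt_succ_self) C
    have hD := card_inter_below_succ (β := β) (hb k k.lt_succ_self) D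
    have hCgap := card_le_card (inter_subset_right (s₁ := C) (s₂ := gap β b k))
    have hDgap := card_le_card (inter_subset_right (s₁ := D) (s₂ := gap β b k))
    rw [gapCard_succ]
    omega

theorem tight_of_minor_mul_minor_pow_ne_zero (hY : ∀ x y, β x ≤ β y → Y x y = 0)
    (hb : ∀ j < k + 1, b j < b (j + 1)) (hb₀ : ∀ x, b 0 ≤ β x) {C D J : Finset α}
    (hbelow : #(C ∩ below β (b (k + 1))) = gapCard β b (k + 1))
    (hlayer : #(C ∩ layer β (b (k + 1))) = #(layer β (b 0)))
    (h : minor Y C D * minor (Y ^ k) D J ≠ 0) :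
    gap β b k ⊆ C ∧ gap β b k ⊆ D ∧ #(D ∩ below β (b k)) = gapCard β b k ∧
      #(D ∩ layer β (b k)) = #(layer β (b 0)) := by
  have hCD := card_inter_below_add_card_inter_layer_le hY (left_ne_zero_of_mul h)
  have hCD₁ := hCD (b k)
  have hCD₂ := hCD (b (k + 1))
  obtain ⟨hD₁, hD₂⟩ := card_inter_le_of_minor_pow_ne_zero hY (fun j hj => hb j (by omega)) hb₀
    (right_ne_zero_of_mul h)
  have hC := card_inter_below_succ (β := β) (hb k k.lt_succ_self) C
  have hD := card_inter_below_succ (β := β) (hb k k.lt_succ_self) D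
  have hCgap := card_le_card (inter_subset_right (s₁ := C) (s₂ := gap β b k))
  have hDgap := card_le_card (inter_subset_right (s₁ := D) (s₂ := gap β b k))
  rw [gapCard_succ] at hbelow
  have gap_subset {B : Finset α} (hB : #(gap β b k) ≤ #(B ∩ gap β b k)) : gap β b k ⊆ B :=
    inter_eq_right.mp (eq_of_subset_of_card_le inter_subset_right hB)
  exact ⟨gap_subset (by omega), gap_subset (by omega), by omega, by omega⟩

theorem minor_eq_mul_mul_of_gap_subset (hβ : Monotone β) (hY : ∀ x y, β x ≤ β y → Y x y = 0)
    (hb : b k < b (k + 1)) {L' E' R' L E A : Finset α} (hL' : L' ⊆ below β (b (k + 1)))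
    (hE' : E' ⊆ layer β (b (k + 1))) (hR' : R' ⊆ above β (b (k + 1))) (hL : L ⊆ below β (b k))
    (hE : E ⊆ layer β (b k)) (hA : A ⊆ above β (b k)) (hgapL' : gap β b k ⊆ L')
    (hgapA : gap β b k ⊆ A) (hLcard : #L = #(L' \ gap β b k)) (hEcard : #E = #E') :
    minor Y (L' ∪ E' ∪ R') (L ∪ E ∪ A) = minor Y (L' \ gap β b k) L *
      minor Y (gap β b k ∪ E') (E ∪ gap β b k) * minor Y R' (A \ gap β b k) := by
  have hrows : L' ∪ E' ∪ R' = (L' \ gap β b k) ∪ ((gap β b k ∪ E') ∪ R') := by grind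
  have hcols : L ∪ E ∪ A = L ∪ ((E ∪ gap β b k) ∪ (A \ gap β b k)) := by grind
  have hmiddle : #(E ∪ gap β b k) = #(gap β b k ∪ E') := by
    rw [card_union_of_disjoint (by grind [disjoint_left]),
      card_union_of_disjoint (by grind [disjoint_left]), hEcard, add_comm]
  rw [hrows, hcols, minor_union_of_level hβ hY (b k) (by grind) (by grind) (by grind) (by grind)
    hLcard, minor_union_of_level hβ hY (b (k + 1)) (by grind) (by grind) (by grind) (by grind)
    hmiddle, mul_assoc]

end Factors

section Factorisation

variable {α Λ R : Type*} [LinearOrder α] [Fintype α] [LinearOrder Λ] [CommRing R]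
  {Y : Matrix α α R} {β : α → Λ} {b : ℕ → Λ} {k : ℕ}

theorem minor_mul_minor_pow_eq (hβ : Monotone β) (hY : ∀ x y, β x ≤ β y → Y x y = 0)
    (hb : ∀ j < k + 1, b j < b (j + 1)) (hb₀ : ∀ x, b 0 ≤ β x) {J : Finset α}
    (ih : ∀ {L E A : Finset α}, L ⊆ below β (b k) → E ⊆ layer β (b k) → A ⊆ above β (b k) →
      #L = gapCard β b k → #E = #(layer β (b 0)) → minor (Y ^ k) (L ∪ E ∪ A) J =
        lowerFactor Y β b k L * middleFactor Y β b k E * upperFactor Y β b J k A)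
    {L' E' R' L E A : Finset α} (hL' : L' ⊆ below β (b (k + 1)))
    (hE' : E' ⊆ layer β (b (k + 1))) (hR' : R' ⊆ above β (b (k + 1)))
    (hL'card : #L' = gapCard β b (k + 1)) (hE'card : #E' = #(layer β (b 0)))
    (hL : L ⊆ below β (b k)) (hE : E ⊆ layer β (b k)) (hA : A ⊆ above β (b k)) :
    minor Y (L' ∪ E' ∪ R') (L ∪ E ∪ A) * minor (Y ^ k) (L ∪ E ∪ A) J =
      (if gap β b k ⊆ L' then minor Y (L' \ gap β b k) L * lowerFactor Y β b k L else 0) *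
      (minor Y (gap β b k ∪ E') (E ∪ gap β b k) * middleFactor Y β b k E) *
      (if gap β b k ⊆ A then minor Y R' (A \ gap β b k) * upperFactor Y β b J k A else 0) := by
  have hbk := hb k k.lt_succ_self
  by_cases htight : gap β b k ⊆ L' ∧ gap β b k ⊆ A ∧ #L = gapCard β b k ∧
      #E = #(layer β (b 0))
  · obtain ⟨hgapL', hgapA, hLcard, hEcard⟩ := htight
    have hLcard' : #L = #(L' \ gap β b k) := by
      rw [card_sdiff_of_subset hgapL', hL'card, gapCard_succ, hLcard, Nat.add_sub_cancel]
    rw [ih hL hE hA hLcard hEcard, minor_eq_mul_mul_of_gap_subset hβ hY hbk hL' hE' hR' hL hE hA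
      hgapL' hgapA hLcard' (hEcard.trans hE'card.symm), if_pos hgapL', if_pos hgapA]
    ring
  have hleft : minor Y (L' ∪ E' ∪ R') (L ∪ E ∪ A) * minor (Y ^ k) (L ∪ E ∪ A) J = 0 := by
    by_contra h
    have hbelow' : (L' ∪ E' ∪ R') ∩ below β (b (k + 1)) = L' := by grind
    have hlayer' : (L' ∪ E' ∪ R') ∩ layer β (b (k + 1)) = E' := by grind
    have hbelow : (L ∪ E ∪ A) ∩ below β (b k) = L := by grind
    have hlayer : (L ∪ E ∪ A) ∩ layer β (b k) = E := by grind
    obtain ⟨h₁, h₂, h₃, h₄⟩ := tight_of_minor_mul_minor_pow_ne_zero hY hb hb₀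
      (by rw [hbelow', hL'card]) (by rw [hlayer', hE'card]) h
    rw [hbelow] at h₃
    rw [hlayer] at h₄
    exact htight ⟨by grind, by grind, h₃, h₄⟩
  rw [hleft]
  split_ifs with hgapL' hgapA
  · by_cases hLcard : #L = gapCard β b k
    · rw [minor_of_card_ne Y (A := gap β b k ∪ E'), zero_mul, mul_zero, zero_mul]
      rw [card_union_of_disjoint (by grind [disjoint_left]),
        card_union_of_disjoint (by grind [disjoint_left])]
      grind
    · rw [minor_of_card_ne Y (B := L), zero_mul, zero_mul, zero_mul]
      rw [card_sdiff_of_subset hgapL', hL'card, gapCard_succ]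
      omega
  all_goals simp

theorem minor_pow_eq_mul (hβ : Monotone β) (hY : ∀ x y, β x ≤ β y → Y x y = 0)
    (hb : ∀ j < k, b j < b (j + 1)) (hb₀ : ∀ x, b 0 ≤ β x) {L E A : Finset α} (J : Finset α)
    (hL : L ⊆ below β (b k)) (hE : E ⊆ layer β (b k)) (hA : A ⊆ above β (b k))
    (hLcard : #L = gapCard β b k) (hEcard : #E = #(layer β (b 0))) :
    minor (Y ^ k) (L ∪ E ∪ A) J =
      lowerFactor Y β b k L * middleFactor Y β b k E * upperFactor Y β b J k A := by
  induction k generalizing L E A with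
  | zero =>
    obtain rfl : L = ∅ := card_eq_zero.mp hLcard
    obtain rfl : E = layer β (b 0) := eq_of_subset_of_card_le hE hEcard.ge
    rw [pow_zero, empty_union, lowerFactor, middleFactor, upperFactor, if_pos rfl, if_pos rfl,
      one_mul, one_mul]
    split_ifs with hJ
    · rw [hJ, minor_one_self]
    · exact minor_one_of_ne hJ
  | succ k ih =>
    have hterm {L' E' A' : Finset α} (hL' : L' ∈ (below β (b k)).powerset)
        (hE' : E' ∈ (layer β (b k)).powerset) (hA' : A' ∈ (above β (b k)).powerset) :=
      minor_mul_minor_pow_eq (J := J) hβ hY hb hb₀ (ih fun j hj => hb j (by omega)) hL hE hA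
        hLcard hEcard (mem_powerset.mp hL') (mem_powerset.mp hE') (mem_powerset.mp hA')
    rw [pow_succ', minor_mul, sum_eq_sum_below_layer_above β (b k), lowerFactor, middleFactor,
      upperFactor, sum_mul_sum, sum_mul]
    refine sum_congr rfl fun L' hL' => ?_
    rw [sum_mul]
    refine sum_congr rfl fun E' hE' => ?_
    rw [mul_sum]
    exact sum_congr rfl fun A' hA' => hterm hL' hE' hA'

end Factorisation

section Duality

open OrderDual (toDual)

variable {α Λ : Type*} [Fintype α] [LinearOrder Λ]

/-- The marked levels `b 0, …, b N` listed backwards, as levels in the opposite order. -/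
def reverseMarks (b : ℕ → Λ) (N : ℕ) (j : ℕ) : Λᵒᵈ := toDual (b (N - j))

variable {β : α → Λ} {b : ℕ → Λ} {N k : ℕ}

theorem layer_toDual (β : α → Λ) (i : Λ) : layer (toDual ∘ β) (toDual i) = layer β i := by
  ext
  simp

theorem below_toDual (β : α → Λ) (i : Λ) : below (toDual ∘ β) (toDual i) = above β i := by
  ext
  simp

theorem gap_toDual (hk : k < N) :
    gap (toDual ∘ β) (reverseMarks b N) (N - (k + 1)) = gap β b k := by
  ext
  simp [reverseMarks, show N - (N - (k + 1)) = k + 1 by omega,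
    show N - (N - (k + 1) + 1) = k by omega, and_comm]

variable {R : Type*} [LinearOrder α] [CommRing R]

theorem sum_lowerFactor_transpose_mul_upperFactor (Y : Matrix α α R) {B : Finset α}
    (hB : B ⊆ above β (b 0)) (hk : k ≤ N) :
    ∑ A ∈ (above β (b k)).powerset,
      lowerFactor Y.transpose (toDual ∘ β) (reverseMarks b N) (N - k) A *
        upperFactor Y β b (layer β (b 0) ∪ B) k A =
      lowerFactor Y.transpose (toDual ∘ β) (reverseMarks b N) N B := by
  induction k with
  | zero =>
    have hbase {A : Finset α} (hA : A ∈ (above β (b 0)).powerset) :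
        upperFactor Y β b (layer β (b 0) ∪ B) 0 A = if A = B then 1 else 0 := by
      have hiff : layer β (b 0) ∪ A = layer β (b 0) ∪ B ↔ A = B := by
        have hdisj {C : Finset α} (hC : C ⊆ above β (b 0)) : Disjoint (layer β (b 0)) C := by
          grind [disjoint_left]
        refine ⟨fun h => ?_, fun h => by rw [h]⟩
        rw [← union_sdiff_cancel_left (hdisj (mem_powerset.mp hA)), h,
          union_sdiff_cancel_left (hdisj hB)]
      simp only [upperFactor, hiff]
    rw [sum_congr rfl fun A hA => by rw [hbase hA, mul_ite, mul_one, mul_zero]]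
    simp [hB]
  | succ k ih =>
    rw [← ih (by omega), show N - k = N - (k + 1) + 1 by omega]
    simp only [upperFactor, lowerFactor, mul_sum, sum_mul]
    rw [sum_comm, gap_toDual (by omega),
      show reverseMarks b N (N - (k + 1)) = toDual (b (k + 1)) by
        simp [reverseMarks, show N - (N - (k + 1)) = k + 1 by omega], below_toDual]
    refine sum_congr rfl fun A _ => sum_congr rfl fun A' _ => ?_
    rw [minor_transpose]
    split_ifs <;> ring

/-- Reading a product of matrices from right to left interchanges the two outer factors. -/
theorem upperFactor_empty (Y : Matrix α α R) (hbN : ∀ x, β x ≤ b N) {B : Finset α}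
    (hB : B ⊆ above β (b 0)) :
    upperFactor Y β b (layer β (b 0) ∪ B) N ∅ =
      lowerFactor Y.transpose (toDual ∘ β) (reverseMarks b N) N B := by
  have habove : above β (b N) = ∅ := by
    ext x
    simp [hbN x]
  rw [← sum_lowerFactor_transpose_mul_upperFactor Y hB le_rfl, habove]
  simp [lowerFactor]

end Duality

section MiddleFactor

variable {α Λ R : Type*} [LinearOrder α] [Fintype α] [LinearOrder Λ] [CommRing R]
  {Y : Matrix α α R} {β : α → Λ} {b : ℕ → Λ} {k : ℕ}

theorem card_inter_layer_le_of_minor_ne_zero (hY : ∀ x y, β x ≤ β y → Y x y = 0) {i : Λ}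
    {Q E : Finset α} (h : minor Y ((Q ∪ E) \ layer β (b 0)) Q ≠ 0) :
    #(Q ∩ layer β i) ≤ #(layer β (b 0)) := by
  have hdisj (C : Finset α) : Disjoint (C ∩ below β i) (C ∩ layer β i) :=
    (disjoint_below_layer β i).mono inter_subset_right inter_subset_right
  have hrows := card_inter_below_add_card_inter_layer_le hY h i
  have hsub : (Q ∩ below β i ∪ Q ∩ layer β i) \ layer β (b 0) ⊆
      ((Q ∪ E) \ layer β (b 0)) ∩ below β i ∪ ((Q ∪ E) \ layer β (b 0)) ∩ layer β i := by
    grind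
  have hcard := (card_le_card_sdiff_add_card (s := Q ∩ below β i ∪ Q ∩ layer β i)
    (t := layer β (b 0))).trans (Nat.add_le_add_right (card_le_card hsub) _)
  rw [card_union_of_disjoint (hdisj _), card_union_of_disjoint (hdisj _)] at hcard
  omega

theorem card_inter_below_le_of_minor_ne_zero (hY : ∀ x y, β x ≤ β y → Y x y = 0)
    (hb : ∀ j < k, b j < b (j + 1)) (hb₀ : ∀ x, b 0 ≤ β x) {Q E : Finset α}
    (h : minor Y ((Q ∪ E) \ layer β (b 0)) Q ≠ 0) :
    #(Q ∩ below β (b k)) ≤ gapCard β b k + k * #(layer β (b 0)) := by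
  induction k with
  | zero =>
    have hbelow : Q ∩ below β (b 0) = ∅ := by
      ext x
      simp [(hb₀ x).not_gt]
    simp [hbelow]
  | succ k ih =>
    have hlayer := card_inter_layer_le_of_minor_ne_zero (i := b k) hY h
    have hgap := card_le_card (inter_subset_right (s₁ := Q) (s₂ := gap β b k))
    have := ih fun j hj => hb j (by omega)
    rw [card_inter_below_succ (hb k k.lt_succ_self), gapCard_succ, Nat.succ_mul]
    omega

theorem tight_of_minor_ne_zero (hY : ∀ x y, β x ≤ β y → Y x y = 0)
    (hb : ∀ j < k + 1, b j < b (j + 1)) (hb₀ : ∀ x, b 0 ≤ β x) {Q E : Finset α}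
    (hQ : Q ⊆ below β (b (k + 1)))
    (hcard : #Q = gapCard β b (k + 1) + (k + 1) * #(layer β (b 0)))
    (h : minor Y ((Q ∪ E) \ layer β (b 0)) Q ≠ 0) :
    gap β b k ⊆ Q ∧ #(Q ∩ below β (b k)) = gapCard β b k + k * #(layer β (b 0)) ∧
      #(Q ∩ layer β (b k)) = #(layer β (b 0)) := by
  have hbelow : #(Q ∩ below β (b k)) ≤ gapCard β b k + k * #(layer β (b 0)) :=
    card_inter_below_le_of_minor_ne_zero hY (fun j hj => hb j (by omega)) hb₀ h
  have hlayer := card_inter_layer_le_of_minor_ne_zero (i := b k) hY h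
  have hgap := card_le_card (inter_subset_right (s₁ := Q) (s₂ := gap β b k))
  have hsum := card_inter_below_succ (β := β) (hb k k.lt_succ_self) Q
  rw [inter_eq_left.mpr hQ, hcard, gapCard_succ, Nat.succ_mul] at hsum
  exact ⟨inter_eq_right.mp (eq_of_subset_of_card_le inter_subset_right (by omega)),
    by omega, by omega⟩

theorem minor_eq_mul_of_layer_subset (hβ : Monotone β) (hY : ∀ x y, β x ≤ β y → Y x y = 0)
    (hb : b k < b (k + 1)) {L E' E : Finset α} (hL : L ⊆ below β (b k))
    (hE' : E' ⊆ layer β (b k)) (hE : E ⊆ layer β (b (k + 1))) (hLE' : layer β (b 0) ⊆ L ∪ E')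
    (hE'card : #E' = #(layer β (b 0))) :
    minor Y ((L ∪ E' ∪ gap β b k ∪ E) \ layer β (b 0)) (L ∪ E' ∪ gap β b k) =
      minor Y (gap β b k ∪ E) (E' ∪ gap β b k) * minor Y ((L ∪ E') \ layer β (b 0)) L := by
  have hrows : (L ∪ E' ∪ gap β b k ∪ E) \ layer β (b 0) =
      ((L ∪ E') \ layer β (b 0)) ∪ (gap β b k ∪ E) := by
    grind
  have hcard : #L = #((L ∪ E') \ layer β (b 0)) := by
    rw [card_sdiff_of_subset hLE', card_union_of_disjoint (by grind [disjoint_left]), hE'card,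
      Nat.add_sub_cancel]
  rw [hrows, union_assoc L, minor_union_of_level hβ hY (b k) (by grind) (by grind) (by grind)
    (by grind) hcard, mul_comm]

/-- The contribution of `Q` to the expansion of `middleFactor` as a sum of minors of `Y`. -/
def middleTerm (Y : Matrix α α R) (β : α → Λ) (b : ℕ → Λ) (k : ℕ) (E Q : Finset α) : R :=
  if #Q = gapCard β b k + k * #(layer β (b 0)) ∧ layer β (b 0) ⊆ Q ∪ E then
    minor Y ((Q ∪ E) \ layer β (b 0)) Q else 0

theorem middleTerm_succ (hβ : Monotone β) (hY : ∀ x y, β x ≤ β y → Y x y = 0)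
    (hb : ∀ j < k + 1, b j < b (j + 1)) (hb₀ : ∀ x, b 0 ≤ β x) {E L E' A : Finset α}
    (hE : E ⊆ layer β (b (k + 1))) (hEcard : #E = #(layer β (b 0))) (hL : L ⊆ below β (b k))
    (hE' : E' ⊆ layer β (b k)) (hA : A ⊆ gap β b k) :
    middleTerm Y β b (k + 1) E (L ∪ E' ∪ A) = if A = gap β b k then
      minor Y (gap β b k ∪ E) (E' ∪ gap β b k) * middleTerm Y β b k E' L else 0 := by
  have hbk := hb k k.lt_succ_self
  have hb0k : b 0 ≤ b k :=
    (strictMonoOn_Iic_of_lt_succ fun j hj => hb j hj).monotoneOn (by simp) (by simp) k.zero_le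
  by_cases htight : A = gap β b k ∧ #E' = #(layer β (b 0))
  · obtain ⟨rfl, hE'card⟩ := htight
    have hcard : #(L ∪ E' ∪ gap β b k) = gapCard β b (k + 1) + (k + 1) * #(layer β (b 0)) ↔
        #L = gapCard β b k + k * #(layer β (b 0)) := by
      rw [card_union_of_disjoint (by grind [disjoint_left]),
        card_union_of_disjoint (by grind [disjoint_left]), gapCard_succ, Nat.succ_mul]
      omega
    have hsub : layer β (b 0) ⊆ L ∪ E' ∪ gap β b k ∪ E ↔ layer β (b 0) ⊆ L ∪ E' := by
      grind
    rw [if_pos rfl, middleTerm, middleTerm, mul_ite, mul_zero]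
    exact ite_congr (propext (and_congr hcard hsub))
      (fun h => minor_eq_mul_of_layer_subset hβ hY hbk hL hE' hE h.2 hE'card) fun _ => rfl
  have hleft : middleTerm Y β b (k + 1) E (L ∪ E' ∪ A) = 0 := by
    by_contra! h
    rw [middleTerm, ite_ne_right_iff] at h
    obtain ⟨⟨hcard, -⟩, h⟩ := h
    obtain ⟨hgap, -, hlayer⟩ := tight_of_minor_ne_zero hY hb hb₀ (by grind) hcard h
    rw [show (L ∪ E' ∪ A) ∩ layer β (b k) = E' by grind] at hlayer
    exact htight ⟨by grind, hlayer⟩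
  rw [hleft]
  split_ifs with hAgap
  · rw [minor_of_card_ne, zero_mul]
    rw [card_union_of_disjoint (by grind [disjoint_left]),
      card_union_of_disjoint (by grind [disjoint_left])]
    grind
  · rfl

theorem middleFactor_eq_sum (hβ : Monotone β) (hY : ∀ x y, β x ≤ β y → Y x y = 0)
    (hb : ∀ j < k, b j < b (j + 1)) (hb₀ : ∀ x, b 0 ≤ β x) {E : Finset α}
    (hE : E ⊆ layer β (b k)) (hEcard : #E = #(layer β (b 0))) :
    middleFactor Y β b k E = ∑ Q ∈ (below β (b k)).powerset, middleTerm Y β b k E Q := by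
  induction k generalizing E with
  | zero =>
    obtain rfl : E = layer β (b 0) := eq_of_subset_of_card_le hE hEcard.ge
    have hbelow : below β (b 0) = ∅ := by
      ext x
      simp [(hb₀ x).not_gt]
    simp [hbelow, middleFactor, middleTerm, gapCard, minor_empty]
  | succ k ih =>
    rw [sum_powerset_below_succ (hb k k.lt_succ_self), sum_comm, middleFactor]
    refine sum_congr rfl fun E' hE' => ?_
    rw [mem_powerset] at hE'
    have hterm {L : Finset α} (hL : L ∈ (below β (b k)).powerset) :
        ∑ A ∈ (gap β b k).powerset, middleTerm Y β b (k + 1) E (L ∪ E' ∪ A) =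
          minor Y (gap β b k ∪ E) (E' ∪ gap β b k) * middleTerm Y β b k E' L := by
      rw [sum_congr rfl fun A hA => middleTerm_succ hβ hY hb hb₀ hE hEcard
        (mem_powerset.mp hL) hE' (mem_powerset.mp hA)]
      simp
    rw [sum_congr rfl fun L hL => hterm hL, ← mul_sum]
    by_cases hE'card : #E' = #(layer β (b 0))
    · rw [ih (fun j hj => hb j (by omega)) hE' hE'card]
    · rw [minor_of_card_ne, zero_mul, zero_mul]
      rw [card_union_of_disjoint (by grind [disjoint_left]),
        card_union_of_disjoint (by grind [disjoint_left])]
      omega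

theorem middleFactor_succ_eq_sum (hβ : Monotone β) (hY : ∀ x y, β x ≤ β y → Y x y = 0)
    (hb : ∀ j < k + 1, b j < b (j + 1)) (hb₀ : ∀ x, b 0 ≤ β x) {E : Finset α}
    (hE : E ⊆ layer β (b (k + 1))) (hEcard : #E = #(layer β (b 0))) :
    middleFactor Y β b (k + 1) E =
      ∑ S ∈ powersetCard (gapCard β b (k + 1) + k * #(layer β (b 0)))
          (below β (b (k + 1)) \ layer β (b 0)),
        minor Y (S ∪ E) (layer β (b 0) ∪ S) := by
  have hb0k : b 0 < b (k + 1) :=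
    strictMonoOn_Iic_of_lt_succ hb (by simp) (by simp) k.succ_pos
  have hsub : layer β (b 0) ⊆ below β (b (k + 1)) := by grind
  have hterm {A S : Finset α} (hA : A ⊆ layer β (b 0))
      (hS : S ⊆ below β (b (k + 1)) \ layer β (b 0)) :
      middleTerm Y β b (k + 1) E (A ∪ S) = if A = layer β (b 0) then
        if #S = gapCard β b (k + 1) + k * #(layer β (b 0)) then
          minor Y (S ∪ E) (layer β (b 0) ∪ S) else 0 else 0 := by
    have hlayer : layer β (b 0) ⊆ A ∪ S ∪ E ↔ A = layer β (b 0) := by grind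
    simp only [middleTerm, hlayer]
    by_cases h : A = layer β (b 0)
    · subst h
      have hrows : (layer β (b 0) ∪ S ∪ E) \ layer β (b 0) = S ∪ E := by grind
      rw [hrows, card_union_of_disjoint (by grind [disjoint_left]), Nat.succ_mul]
      simp only [and_true, if_true]
      exact if_congr (by omega) rfl rfl
    · simp [h]
  rw [middleFactor_eq_sum hβ hY hb hb₀ hE hEcard, ← union_sdiff_of_subset hsub,
    sum_powerset_union disjoint_sdiff, union_sdiff_of_subset hsub,
    sum_congr rfl fun A hA => sum_congr rfl fun S hS =>
      hterm (mem_powerset.mp hA) (mem_powerset.mp hS),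
    sum_eq_single_of_mem _ (mem_powerset_self _) fun A _ hA => by simp [hA]]
  simp only [if_true]
  rw [← sum_filter, ← powersetCard_eq_filter]

end MiddleFactor

section ShiftedDeterminant

variable {R : Type*} [CommRing R]

theorem det_add_diagonal {ι : Type*} [Fintype ι] [DecidableEq ι] (A : Matrix ι ι R) (d : ι → R) :
    (A + Matrix.diagonal d).det =
      ∑ S : Finset ι, (∏ i ∈ Sᶜ, d i) * (A.submatrix (Subtype.val : S → ι) Subtype.val).det := by
  have hrows : A + Matrix.diagonal d = A.row + fun i => d i • (1 : Matrix ι ι R).row i := by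
    ext i j
    simp [Matrix.diagonal_apply, Matrix.one_apply]
  have hpiecewise (S : Finset ι) :
      S.piecewise A.row (fun i => d i • (1 : Matrix ι ι R).row i) =
        Sᶜ.piecewise (fun i => d i • S.piecewise A.row (1 : Matrix ι ι R).row i)
          (S.piecewise A.row (1 : Matrix ι ι R).row) := by
    ext i
    by_cases hi : i ∈ S <;> simp [hi]
  change Matrix.detRowAlternating.toMultilinearMap (A + Matrix.diagonal d) = _
  rw [hrows, MultilinearMap.map_add_univ]
  refine sum_congr rfl fun S _ => ?_
  rw [hpiecewise, MultilinearMap.map_piecewise_smul, smul_eq_mul,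
    ← Matrix.det_piecewise_one_eq_submatrix_det]
  rfl

theorem det_submatrix_disjSum_univ {ι κ : Type*} [DecidableEq ι] [Fintype κ]
    [DecidableEq κ] (A : Matrix (ι ⊕ κ) (ι ⊕ κ) R) (S : Finset ι) :
    (A.submatrix (Subtype.val : S.disjSum (univ : Finset κ) → ι ⊕ κ) Subtype.val).det =
      (A.submatrix (Sum.map (Subtype.val : S → ι) id) (Sum.map Subtype.val id)).det := by
  let e (x : S ⊕ κ) : S.disjSum (univ : Finset κ) :=
    ⟨x.map Subtype.val id, by rcases x with x | x <;> simp⟩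
  have he : Function.Bijective e := by
    refine ⟨fun x y h => ?_, ?_⟩
    · exact (Subtype.val_injective.sumMap Function.injective_id) (congrArg Subtype.val h)
    · rintro ⟨x | x, hx⟩
      · exact ⟨.inl ⟨x, by simpa using hx⟩, rfl⟩
      · exact ⟨.inr x, rfl⟩
  rw [← Matrix.det_submatrix_equiv_self (Equiv.ofBijective e he)]
  rfl

theorem coeff_det_add_diagonal_X {ι κ : Type*} [Fintype ι] [DecidableEq ι] [Fintype κ]
    [DecidableEq κ] (A : Matrix (ι ⊕ κ) (ι ⊕ κ) R) (d : ℕ) :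
    (A.map Polynomial.C + Matrix.diagonal (Sum.elim (fun _ => Polynomial.X) 0)).det.coeff d =
      ∑ S : Finset ι with #Sᶜ = d, (A.submatrix
        (Sum.map (Subtype.val : S → ι) id) (Sum.map Subtype.val id)).det := by
  have hsum (F : Finset (ι ⊕ κ) → Polynomial R) :
      ∑ U, F U = ∑ S : Finset ι, ∑ T : Finset κ, F (S.disjSum T) := by
    rw [← sumEquiv.symm.toEquiv.sum_comp, Fintype.sum_prod_type]
    rfl
  rw [det_add_diagonal, hsum, Polynomial.finsetSum_coeff, sum_filter]
  refine sum_congr rfl fun S _ => ?_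
  rw [Fintype.sum_eq_single univ fun T hT => ?_]
  · have hprod : ∏ x ∈ (S.disjSum (univ : Finset κ))ᶜ,
        Sum.elim (fun _ => (Polynomial.X : Polynomial R)) 0 x = Polynomial.X ^ #Sᶜ := by
      rw [show (S.disjSum (univ : Finset κ))ᶜ = Sᶜ.disjSum ∅ by ext (x | x) <;> simp,
        prod_disjSum]
      simp
    have hdet : ((A.map Polynomial.C).submatrix (Sum.map (Subtype.val : S → ι) id)
        (Sum.map Subtype.val id)).det = Polynomial.C (A.submatrix
        (Sum.map (Subtype.val : S → ι) id) (Sum.map Subtype.val id)).det :=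
      (RingHom.map_det Polynomial.C _).symm
    rw [hprod, det_submatrix_disjSum_univ, hdet, mul_comm, Polynomial.coeff_C_mul_X_pow]
    simp only [eq_comm]
  · obtain ⟨j, hj⟩ : ∃ j, j ∉ T := by simpa [eq_univ_iff_forall] using hT
    rw [prod_eq_zero (i := Sum.inr j) (by simpa using hj) rfl, zero_mul]

theorem exists_det_sumElim_eq_smul_minor {α : Type*} [LinearOrder α] (Y : Matrix α α R)
    (q c : ℕ) : ∃ ε : ℤˣ, ∀ {f : Fin q → α} {g h : Fin c → α},
      StrictMono f → StrictMono g → StrictMono h → (∀ i j, f i < g j) → (∀ j i, h j < f i) →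
      (Y.submatrix (Sum.elim f g) (Sum.elim f h)).det =
        ε • minor Y (univ.image f ∪ univ.image g) (univ.image h ∪ univ.image f) := by
  let τ : Equiv.Perm (Fin (q + c)) := finSumFinEquiv.symm.trans
    ((Equiv.sumComm _ _).trans (finSumFinEquiv.trans (finCongr (add_comm c q))))
  refine ⟨Equiv.Perm.sign τ, fun {f g h} hf hg hh hfg hhf => ?_⟩
  let cast := finCongr (add_comm q c)
  have hrows : StrictMono (Fin.append f g) := strictMono_append hf hg hfg
  have hcols : StrictMono (Fin.append h f ∘ cast) :=
    (strictMono_append hh hf hhf).comp (Fin.cast_strictMono (add_comm q c))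
  have himage : univ.image (Fin.append h f ∘ cast) = univ.image h ∪ univ.image f := by
    rw [← image_append, ← image_image, image_univ_equiv]
  have hτ : (Y.submatrix (Fin.append f g) (Fin.append h f ∘ cast)).submatrix id τ =
      (Y.submatrix (Sum.elim f g) (Sum.elim f h)).submatrix finSumFinEquiv.symm
        finSumFinEquiv.symm := by
    ext i j
    refine Fin.addCases (fun i => ?_) (fun i => ?_) i <;>
      refine Fin.addCases (fun j => ?_) (fun j => ?_) j <;> simp [τ, cast]
  rw [← image_append, ← himage, minor_image Y hrows hcols,
    ← Matrix.det_submatrix_equiv_self finSumFinEquiv.symm, ← hτ, Matrix.det_permute',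
    Units.smul_def, zsmul_eq_mul]

theorem exists_coeff_det_add_diagonal_X_eq_smul_sum_minor {α : Type*} [LinearOrder α]
    (Y : Matrix α α R) {d q c : ℕ} {f : Fin (d + q) → α} {g h : Fin c → α} (hf : StrictMono f)
    (hg : StrictMono g) (hh : StrictMono h) (hfg : ∀ i j, f i < g j) (hhf : ∀ j i, h j < f i) :
    ∃ ε : ℤˣ, ((Y.submatrix (Sum.elim f g) (Sum.elim f h)).map Polynomial.C +
      Matrix.diagonal (Sum.elim (fun _ => Polynomial.X) 0)).det.coeff d =
      ε • ∑ S ∈ powersetCard q (univ.image f),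
        minor Y (S ∪ univ.image g) (univ.image h ∪ S) := by
  obtain ⟨ε, hε⟩ := exists_det_sumElim_eq_smul_minor Y q c
  refine ⟨ε, ?_⟩
  have hfilter : ({S | #Sᶜ = d} : Finset (Finset (Fin (d + q)))) = powersetCard q univ := by
    ext S
    have := card_compl_add_card S
    simp only [mem_filter, mem_univ, true_and, mem_powersetCard, subset_univ, Fintype.card_fin]
      at this ⊢
    omega
  rw [coeff_det_add_diagonal_X, hfilter, show univ.image f = univ.map ⟨f, hf.injective⟩ from
    (map_eq_image ⟨f, hf.injective⟩ univ).symm, powersetCard_map, sum_map, smul_sum]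
  refine sum_congr rfl fun S hS => ?_
  let e := S.orderIsoOfFin (mem_powersetCard.mp hS).2
  let fS (i : Fin q) : α := f (e i)
  have hfS : StrictMono fS := fun i j hij => hf (e.strictMono hij)
  have himage : univ.image fS = S.map ⟨f, hf.injective⟩ := by
    rw [map_eq_image, ← S.image_orderEmbOfFin_univ (mem_powersetCard.mp hS).2, image_image]
    rfl
  change _ = ε • minor Y (S.map ⟨f, hf.injective⟩ ∪ _) (_ ∪ S.map ⟨f, hf.injective⟩)
  rw [← himage, ← hε hfS hg hh (fun i j => hfg _ j) (fun j i => hhf j _),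
    ← Matrix.det_submatrix_equiv_self (e.toEquiv.sumCongr (Equiv.refl (Fin c)))]
  congr 1
  ext (i | i) (j | j) <;> rfl

end ShiftedDeterminant

section Homogeneity

variable {σ M R : Type*} [CommRing R]

theorem weightedHomogeneousComponent_add_mul [AddCommMonoid M] {w : σ → M}
    {p q : MvPolynomial σ R} {A B : Finset M} {i j : M}
    (hA : ∀ d ∈ p.support, Finsupp.weight w d ∈ A) (hB : ∀ d ∈ q.support, Finsupp.weight w d ∈ B)
    (hi : i ∈ A) (hj : j ∈ B) (hij : UniqueAdd A B i j) :
    weightedHomogeneousComponent w (i + j) (p * q) =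
      weightedHomogeneousComponent w i p * weightedHomogeneousComponent w j q := by
  classical
  have hsum {f : MvPolynomial σ R} {C : Finset M}
      (hC : ∀ d ∈ f.support, Finsupp.weight w d ∈ C) :
      f = ∑ a ∈ C, weightedHomogeneousComponent w a f := by
    rw [← finsum_eq_sum_of_support_subset, sum_weightedHomogeneousComponent]
    intro a ha
    by_contra haC
    exact ha (weightedHomogeneousComponent_eq_zero' a f fun d hd h => haC (h ▸ hC d hd))
  conv_lhs => rw [hsum hA, hsum hB, sum_mul_sum, map_sum]
  simp only [map_sum]
  have hmul (a b : M) := weightedHomogeneousComponent_of_mem (m := i + j)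
    ((weightedHomogeneousComponent_isWeightedHomogeneous a p (w := w)).mul
      (weightedHomogeneousComponent_isWeightedHomogeneous b q))
  rw [sum_eq_single_of_mem i hi, sum_eq_single_of_mem j hj, hmul, if_pos rfl]
  · exact fun b hb hbj => by rw [hmul, if_neg fun h => hbj (hij hi hb h.symm).2]
  · exact fun a ha hai => sum_eq_zero fun b hb => by
      rw [hmul, if_neg fun h => hai (hij ha hb h.symm).1]

theorem exists_isWeightedHomogeneous_of_dvd [AddCommMonoid M] [TwoUniqueSums M] [IsDomain R]
    {w : σ → M} {p r : MvPolynomial σ R} {n : M} (hr : IsWeightedHomogeneous w r n)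
    (hr0 : r ≠ 0) (hpr : p ∣ r) : ∃ i, IsWeightedHomogeneous w p i := by
  classical
  obtain ⟨q, rfl⟩ := hpr
  let A := p.support.image (Finsupp.weight w)
  let B := q.support.image (Finsupp.weight w)
  have hA : A.Nonempty := (support_nonempty.mpr (left_ne_zero_of_mul hr0)).image _
  have hB : B.Nonempty := (support_nonempty.mpr (right_ne_zero_of_mul hr0)).image _
  have hcomponent {f : MvPolynomial σ R} {i : M} (hi : i ∈ f.support.image (Finsupp.weight w)) :
      weightedHomogeneousComponent w i f ≠ 0 := by
    obtain ⟨d, hd, rfl⟩ := mem_image.mp hi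
    rw [ne_zero_iff]
    exact ⟨d, by rwa [coeff_weightedHomogeneousComponent, if_pos rfl, ← mem_support_iff]⟩
  have hunique {i j : M} (hi : i ∈ A) (hj : j ∈ B) (hij : UniqueAdd A B i j) : i + j = n := by
    by_contra h
    refine mul_ne_zero (hcomponent hi) (hcomponent hj) ?_
    rw [← weightedHomogeneousComponent_add_mul (fun _ => mem_image_of_mem _)
      (fun _ => mem_image_of_mem _) hi hj hij]
    exact hr.weightedHomogeneousComponent_ne _ h
  have hcard : #A * #B ≤ 1 := by
    by_contra! h
    obtain ⟨⟨i, j⟩, hij, ⟨i', j'⟩, hij', hne, hu, hu'⟩ :=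
      TwoUniqueSums.uniqueAdd_of_one_lt_card h
    rw [mem_product] at hij hij'
    obtain ⟨rfl, rfl⟩ := hu hij'.1 hij'.2
      ((hunique hij'.1 hij'.2 hu').trans (hunique hij.1 hij.2 hu).symm)
    exact hne rfl
  obtain ⟨i, hi⟩ := hA
  refine ⟨i, fun d hd => card_le_one.mp ?_ _ (mem_image_of_mem _ (mem_support_iff.mpr hd)) i hi⟩
  exact (Nat.le_mul_of_pos_right _ hB.card_pos).trans hcard

variable [AddCommGroup M] {w : σ → M}

theorem isWeightedHomogeneous_det {ι : Type*} [Fintype ι] [DecidableEq ι]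
    {Y : Matrix ι ι (MvPolynomial σ R)} {p q : ι → M}
    (hY : ∀ i j, IsWeightedHomogeneous w (Y i j) (p i - q j)) :
    IsWeightedHomogeneous w Y.det (∑ i, p i - ∑ j, q j) := by
  rw [Matrix.det_apply]
  refine IsWeightedHomogeneous.sum _ _ _ fun τ _ => ?_
  have hprod := IsWeightedHomogeneous.prod univ _ _ fun i _ => hY (τ i) i
  rw [sum_sub_distrib, Equiv.sum_comp τ p] at hprod
  exact (weightedHomogeneousSubmodule R w _).toAddSubgroup.zsmul_mem hprod _

theorem isWeightedHomogeneous_minor {α : Type*} [LinearOrder α]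
    {Y : Matrix α α (MvPolynomial σ R)} {p : α → M}
    (hY : ∀ x y, IsWeightedHomogeneous w (Y x y) (p x - p y)) (A B : Finset α) :
    IsWeightedHomogeneous w (minor Y A B) (∑ x ∈ A, p x - ∑ y ∈ B, p y) := by
  by_cases hcard : #B = #A
  · rw [minor_eq_det Y rfl hcard, ← A.sum_coe_sort p, ← B.sum_coe_sort p,
      ← Equiv.sum_comp (A.orderIsoOfFin rfl).toEquiv,
      ← Equiv.sum_comp (B.orderIsoOfFin hcard).toEquiv]
    exact isWeightedHomogeneous_det fun i j => hY _ _
  · rw [minor_of_card_ne Y hcard]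
    exact isWeightedHomogeneous_zero R w _

theorem isWeightedHomogeneous_lowerFactor {α Λ : Type*} [LinearOrder α] [Fintype α]
    [LinearOrder Λ] {Y : Matrix α α (MvPolynomial σ R)} {p : α → M}
    (hY : ∀ x y, IsWeightedHomogeneous w (Y x y) (p x - p y)) (β : α → Λ) (b : ℕ → Λ) (k : ℕ)
    (A : Finset α) :
    IsWeightedHomogeneous w (lowerFactor Y β b k A)
      (∑ x ∈ A, p x - ∑ j ∈ range k, ∑ x ∈ gap β b j, p x) := by
  induction k generalizing A with
  | zero =>
    rw [lowerFactor]
    split_ifs with hA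
    · simpa [hA] using isWeightedHomogeneous_one R w
    · exact isWeightedHomogeneous_zero R w _
  | succ k ih =>
    rw [lowerFactor]
    refine IsWeightedHomogeneous.sum _ _ _ fun L _ => ?_
    split_ifs with hA
    · convert (isWeightedHomogeneous_minor hY (A \ gap β b k) L).mul (ih L) using 1
      rw [← sum_sdiff hA, sum_range_succ]
      abel
    · exact isWeightedHomogeneous_zero R w _

end Homogeneity

section GenericMatrix

variable {α Λ σ K : Type*} [LinearOrder Λ] [Field K]

/-- A strictly block lower triangular matrix all of whose admissible entries are variables:
`β` assigns to an index its block, and the variable `v` sits in row `row v` and column `col v`. -/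
structure IsGenericNilpotent (β : α → Λ) (row col : σ → α)
    (Y : Matrix α α (MvPolynomial σ K)) : Prop where
  eq_zero : ∀ x y, β x ≤ β y → Y x y = 0
  eq_X : ∀ x y, β y < β x → ∃ v, row v = x ∧ col v = y ∧ Y x y = X v
  lt : ∀ v, β (col v) < β (row v)

/-- The degree of a variable for the grading by rows and columns, under which the entry in row `x`
and column `y` of a generic matrix has degree `Pi.single x 1 - Pi.single y 1`. -/
def rowColWeight [DecidableEq α] (row col : σ → α) (v : σ) : α → ℤ :=
  Pi.single (row v) 1 - Pi.single (col v) 1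

variable {β : α → Λ} {row col : σ → α} {Y : Matrix α α (MvPolynomial σ K)}

theorem IsGenericNilpotent.transpose (hY : IsGenericNilpotent β row col Y) :
    IsGenericNilpotent (OrderDual.toDual ∘ β) col row Y.transpose where
  eq_zero x y h := hY.eq_zero y x h
  eq_X x y h := by
    obtain ⟨v, hrow, hcol, hv⟩ := hY.eq_X y x h
    exact ⟨v, hcol, hrow, hv⟩
  lt v := hY.lt v

theorem IsGenericNilpotent.map_eval (hY : IsGenericNilpotent β row col Y) {Z : Matrix α α K}
    (hZ : ∀ x y, β x ≤ β y → Z x y = 0) : Y.map (eval fun v => Z (row v) (col v)) = Z := by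
  ext x y
  rcases lt_or_ge (β y) (β x) with h | h
  · obtain ⟨v, rfl, rfl, hv⟩ := hY.eq_X x y h
    simp [hv]
  · simp [hY.eq_zero x y h, hZ x y h]

variable [DecidableEq α]

theorem IsGenericNilpotent.isWeightedHomogeneous (hY : IsGenericNilpotent β row col Y) (x y : α) :
    IsWeightedHomogeneous (rowColWeight row col) (Y x y) (Pi.single x 1 - Pi.single y 1) := by
  rcases lt_or_ge (β y) (β x) with h | h
  · obtain ⟨v, rfl, rfl, hv⟩ := hY.eq_X x y h
    exact hv ▸ isWeightedHomogeneous_X K _ v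
  · exact hY.eq_zero x y h ▸ isWeightedHomogeneous_zero K _ _

theorem weight_rowColWeight_nonpos {d : σ →₀ ℕ} {a : α} (ha : ∀ v ∈ d.support, row v ≠ a) :
    Finsupp.weight (rowColWeight row col) d a ≤ 0 := by
  rw [Finsupp.weight_apply, Finsupp.sum, Finset.sum_apply]
  refine sum_nonpos fun v hv => ?_
  simp only [rowColWeight, Pi.smul_apply, Pi.sub_apply, Pi.single_eq_of_ne (ha v hv).symm,
    zero_sub, nsmul_eq_mul, mul_neg, Left.neg_nonpos_iff]
  exact mul_nonneg (Nat.cast_nonneg _) ((Pi.single_nonneg (α := fun _ => ℤ)).mpr zero_le_one a)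

theorem weight_rowColWeight_pos {d : σ →₀ ℕ} {v : σ} (hv : v ∈ d.support)
    (hcol : ∀ u ∈ d.support, col u ≠ row v) :
    0 < Finsupp.weight (rowColWeight row col) d (row v) := by
  rw [Finsupp.weight_apply, Finsupp.sum, Finset.sum_apply]
  refine sum_pos' (fun u hu => ?_) ⟨v, hv, ?_⟩
  · simp only [rowColWeight, Pi.smul_apply, Pi.sub_apply, Pi.single_eq_of_ne (hcol u hu).symm,
      sub_zero, nsmul_eq_mul]
    exact mul_nonneg (Nat.cast_nonneg _) ((Pi.single_nonneg (α := fun _ => ℤ)).mpr zero_le_one _)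
  · simpa [rowColWeight, (hcol v hv).symm, Nat.pos_iff_ne_zero] using hv

/-- In a nonconstant homogeneous polynomial, the row of a variable of maximal block has positive
degree, so that row occurs in every monomial. -/
theorem isUnit_of_isWeightedHomogeneous (hlt : ∀ v, β (col v) < β (row v))
    {g : MvPolynomial σ K} (hg : g ≠ 0) {n : α → ℤ}
    (hn : IsWeightedHomogeneous (rowColWeight row col) g n)
    (hrow : ∀ a, ∃ ξ : σ → K, (∀ v, row v = a → ξ v = 0) ∧ eval ξ g ≠ 0) : IsUnit g := by
  have hnonpos (a : α) : n a ≤ 0 := by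
    obtain ⟨ξ, hξ, hgξ⟩ := hrow a
    rw [eval_eq] at hgξ
    obtain ⟨d, hd, hne⟩ := exists_ne_zero_of_sum_ne_zero hgξ
    rw [← hn (mem_support_iff.mp hd)]
    refine weight_rowColWeight_nonpos fun v hv hva => ?_
    have hdv := prod_ne_zero_iff.mp (right_ne_zero_of_mul hne) v hv
    exact hdv (by rw [hξ v hva, zero_pow (Finsupp.mem_support_iff.mp hv)])
  have hconst {d : σ →₀ ℕ} (hd : d ∈ g.support) : d = 0 := by
    rw [← Finsupp.support_eq_empty]
    by_contra! hne
    obtain ⟨v, hv, hmax⟩ := exists_max_image d.support (fun v => β (row v)) hne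
    have hpos := weight_rowColWeight_pos (col := col) hv fun u hu huv =>
      (hlt u).not_ge (by simpa only [huv] using hmax u hu)
    rw [hn (mem_support_iff.mp hd)] at hpos
    exact (hnonpos _).not_gt hpos
  obtain ⟨d, hd⟩ := support_nonempty.mpr hg
  obtain rfl := hconst hd
  exact isUnit_iff_totalDegree_of_isReduced.mpr ⟨(mem_support_iff.mp hd).isUnit,
    (totalDegree_eq_zero_iff _ g).mpr fun m hm v => by simp [hconst hm]⟩

end GenericMatrix

section RelationMatrix

variable {α R : Type*} [CommRing R] {E : α → α → Prop}

/-- The matrix with a one in row `y` and column `x` whenever `E x y`. -/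
def relationMatrix (R : Type*) [CommRing R] (E : α → α → Prop) : Matrix α α R :=
  open Classical in Matrix.of fun y x => if E x y then 1 else 0

theorem relationMatrix_of_rel {x y : α} (h : E x y) : relationMatrix R E y x = 1 :=
  if_pos h

theorem relationMatrix_of_not_rel {x y : α} (h : ¬ E x y) : relationMatrix R E y x = 0 :=
  if_neg h

open Classical in
/-- The image of a finite set under a relation. -/
def targets [Fintype α] (E : α → α → Prop) (S : Finset α) : Finset α := {y | ∃ x ∈ S, E x y}

theorem mem_targets [Fintype α] {S : Finset α} {y : α} : y ∈ targets E S ↔ ∃ x ∈ S, E x y := by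
  simp [targets]

theorem card_targets [Fintype α] {S : Finset α} (hE : Relator.BiUnique E)
    (hS : ∀ x ∈ S, ∃ y, E x y) : #(targets E S) = #S := by
  choose! f hf using hS
  refine (card_bij (fun x _ => f x) (fun x hx => mem_targets.mpr ⟨x, hx, hf x hx⟩)
    (fun x hx y hy h => hE.1 (hf x hx) (h ▸ hf y hy)) fun y hy => ?_).symm
  obtain ⟨x, hx, hxy⟩ := mem_targets.mp hy
  exact ⟨x, hx, hE.2 (hf x hx) hxy⟩

variable [LinearOrder α]

theorem minor_relationMatrix_ne_zero [Nontrivial R] (hE : Relator.BiUnique E) {A B : Finset α}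
    (hA : ∀ y ∈ A, ∃ x ∈ B, E x y) (hcard : #B = #A) : minor (relationMatrix R E) A B ≠ 0 := by
  rw [minor_eq_det _ rfl hcard]
  let e := A.orderEmbOfFin rfl
  let f := B.orderEmbOfFin hcard
  let M := (relationMatrix R E).submatrix e f
  refine Matrix.det_ne_zero_of_right_inverse (B := M.transpose) ?_
  ext i j
  obtain ⟨x, hx, hxi⟩ := hA (e i) (orderEmbOfFin_mem A rfl i)
  obtain ⟨t, rfl⟩ : x ∈ Set.range f := by rwa [range_orderEmbOfFin]
  rw [Matrix.mul_apply, sum_eq_single_of_mem t (mem_univ t)]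
  · change relationMatrix R E (e i) (f t) * relationMatrix R E (e j) (f t) = _
    rw [relationMatrix_of_rel hxi, one_mul, Matrix.one_apply]
    split_ifs with hij
    · exact relationMatrix_of_rel (hij ▸ hxi)
    · exact relationMatrix_of_not_rel fun h => hij (e.injective (hE.2 hxi h))
  · intro t' _ ht'
    rw [Matrix.submatrix_apply,
      relationMatrix_of_not_rel fun h => ht' (f.injective (hE.1 h hxi)), zero_mul]

theorem exists_rel_of_minor_relationMatrix_ne_zero {A B : Finset α}
    (h : minor (relationMatrix R E) A B ≠ 0) {y : α} (hy : y ∈ A) : ∃ x ∈ B, E x y := by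
  contrapose! h
  refine minor_eq_zero_of_card_lt _ (S := {y}) (T := ∅) (by simpa) (fun a ha x hx _ => ?_)
    (by simp)
  rw [mem_singleton.mp ha]
  exact relationMatrix_of_not_rel (h x hx)

variable [Fintype α] {S : Finset α}

theorem minor_relationMatrix_targets_ne_zero_iff [Nontrivial R] (hE : Relator.BiUnique E)
    (hS : ∀ x ∈ S, ∃ y, E x y) {B : Finset α} :
    minor (relationMatrix R E) (targets E S) B ≠ 0 ↔ B = S := by
  refine ⟨fun h => ?_, ?_⟩
  · have hcard : #B = #S := by
      by_contra hne
      exact h (minor_of_card_ne _ (by rwa [card_targets hE hS]))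
    refine (eq_of_subset_of_card_le (fun x hx => ?_) hcard.le).symm
    obtain ⟨y, hxy⟩ := hS x hx
    obtain ⟨x', hx', hxy'⟩ :=
      exists_rel_of_minor_relationMatrix_ne_zero h (mem_targets.mpr ⟨x, hx, hxy⟩)
    exact hE.1 hxy hxy' ▸ hx'
  · rintro rfl
    exact minor_relationMatrix_ne_zero hE (fun y hy => mem_targets.mp hy)
      (card_targets hE hS).symm

variable {Λ : Type*} [LinearOrder Λ] {β : α → Λ} {b : ℕ → Λ} {k N : ℕ} {D : Finset α}

/-- The indices reached after `k` steps along `E` when those of the gap `j` are injected at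
step `j + 1`. -/
def reached (E : α → α → Prop) (β : α → Λ) (b : ℕ → Λ) : ℕ → Finset α
  | 0 => ∅
  | k + 1 => gap β b k ∪ targets E (reached E β b k)

/-- `E` moves every element of `D` within `D`, without jumping over a marked level `b k` with
`0 < k < N`. -/
def IsConveyor (E : α → α → Prop) (β : α → Λ) (b : ℕ → Λ) (N : ℕ) (D : Finset α) : Prop :=
  ∀ x ∈ D, ∀ k, 0 < k → k < N → β x < b k → ∃ y ∈ D, E x y ∧ β y ≤ b k

theorem reached_subset_inter_below (hE : Relator.RightUnique E) (hb : ∀ j < N, b j < b (j + 1))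
    (hgap : ∀ j < N, gap β b j ⊆ D) (hD : IsConveyor E β b N D) (hk : k ≤ N) :
    reached E β b k ⊆ D ∩ below β (b k) := by
  induction k with
  | zero => simp [reached]
  | succ k ih =>
    refine union_subset (fun x hx => ?_) fun y hy => ?_
    · exact mem_inter.mpr ⟨hgap k hk hx, by grind⟩
    · obtain ⟨x, hx, hxy⟩ := mem_targets.mp hy
      have hk0 : 0 < k := Nat.pos_of_ne_zero fun h => by simp [h, reached] at hx
      have hxD := mem_inter.mp (ih (by omega) hx)
      obtain ⟨z, hz, hxz, hzk⟩ := hD x hxD.1 k hk0 hk (mem_below.mp hxD.2)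
      obtain rfl := hE hxy hxz
      exact mem_inter.mpr ⟨hz, mem_below.mpr (hzk.trans_lt (hb k hk))⟩

theorem exists_rel_of_mem_reached (hE : Relator.RightUnique E) (hb : ∀ j < N, b j < b (j + 1))
    (hgap : ∀ j < N, gap β b j ⊆ D) (hD : IsConveyor E β b N D) (hk : k < N) {x : α}
    (hx : x ∈ reached E β b k) : ∃ y, E x y ∧ β y ≤ b k := by
  have hk0 : 0 < k := Nat.pos_of_ne_zero fun h => by simp [h, reached] at hx
  have hxD := mem_inter.mp (reached_subset_inter_below hE hb hgap hD hk.le hx)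
  obtain ⟨y, -, hxy, hy⟩ := hD x hxD.1 k hk0 hk (mem_below.mp hxD.2)
  exact ⟨y, hxy, hy⟩

theorem reached_succ_sdiff_gap (hE : Relator.RightUnique E)
    (hreached : ∀ x ∈ reached E β b k, ∃ y, E x y ∧ β y ≤ b k) :
    reached E β b (k + 1) \ gap β b k = targets E (reached E β b k) := by
  refine union_sdiff_cancel_left (disjoint_left.mpr fun y hy hyT => ?_)
  obtain ⟨x, hx, hxy⟩ := mem_targets.mp hyT
  obtain ⟨z, hxz, hz⟩ := hreached x hx
  obtain rfl := hE hxy hxz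
  exact (mem_gap.mp hy).1.not_ge hz

theorem lowerFactor_relationMatrix_reached_ne_zero [IsDomain R] (hE : Relator.BiUnique E)
    (hb : ∀ j < N, b j < b (j + 1)) (hgap : ∀ j < N, gap β b j ⊆ D)
    (hD : IsConveyor E β b N D) (hk : k ≤ N) :
    lowerFactor (relationMatrix R E) β b k (reached E β b k) ≠ 0 := by
  induction k with
  | zero => simp [lowerFactor, reached]
  | succ k ih =>
    have hsub := reached_subset_inter_below hE.2 hb hgap hD (Nat.le_of_succ_le hk)
    have hmove (x : α) (hx : x ∈ reached E β b k) :=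
      exists_rel_of_mem_reached hE.2 hb hgap hD hk hx
    have hminor {L : Finset α} := minor_relationMatrix_targets_ne_zero_iff (R := R) (B := L) hE
      fun x hx => (hmove x hx).imp fun y hy => hy.1
    rw [lowerFactor, reached_succ_sdiff_gap hE.2 hmove]
    simp only [show gap β b k ⊆ reached E β b (k + 1) from subset_union_left, if_true]
    rw [sum_eq_single_of_mem (reached E β b k)
      (mem_powerset.mpr (hsub.trans inter_subset_right))]
    · exact mul_ne_zero (hminor.mpr rfl) (ih (Nat.le_of_succ_le hk))
    · intro L _ hL
      rw [not_not.mp (mt hminor.mp hL), zero_mul]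

end RelationMatrix

section Tracks

variable {α Λ R : Type*} [LinearOrder Λ] {β : α → Λ} {lab : α → ℕ} {D : Finset α}

/-- Within `D`, the index `y` is the next one after `x` that carries the same label. -/
def Follows (β : α → Λ) (lab : α → ℕ) (D : Finset α) (x y : α) : Prop :=
  x ∈ D ∧ y ∈ D ∧ lab x = lab y ∧ β x < β y ∧
    ∀ z ∈ D, lab z = lab x → ¬ (β x < β z ∧ β z < β y)

theorem follows_biUnique (hlab : ∀ x ∈ D, ∀ y ∈ D, β x = β y → lab x = lab y → x = y) :
    Relator.BiUnique (Follows β lab D) := by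
  constructor
  · rintro x x' y ⟨hx, -, hxy, hlt, hmin⟩ ⟨hx', -, hxy', hlt', hmin'⟩
    rcases lt_trichotomy (β x) (β x') with h | h | h
    · exact absurd ⟨h, hlt'⟩ (hmin x' hx' (hxy'.trans hxy.symm))
    · exact hlab x hx x' hx' h (hxy.trans hxy'.symm)
    · exact absurd ⟨h, hlt⟩ (hmin' x hx (hxy.trans hxy'.symm))
  · rintro x y y' ⟨-, hy, hxy, hlt, hmin⟩ ⟨-, hy', hxy', hlt', hmin'⟩
    rcases lt_trichotomy (β y) (β y') with h | h | h
    · exact absurd ⟨hlt, h⟩ (hmin' y hy hxy.symm)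
    · exact hlab y hy y' hy' h (hxy.symm.trans hxy')
    · exact absurd ⟨hlt', h⟩ (hmin y' hy' hxy'.symm)

theorem exists_follows {x y : α} (hx : x ∈ D) (hy : y ∈ D) (hxy : lab y = lab x)
    (hlt : β x < β y) : ∃ z ∈ D, Follows β lab D x z ∧ β z ≤ β y := by
  obtain ⟨z, hz, hmin⟩ := exists_min_image {z ∈ D | lab z = lab x ∧ β x < β z} β
    ⟨y, mem_filter.mpr ⟨hy, hxy, hlt⟩⟩
  obtain ⟨hzD, hzx, hxz⟩ := mem_filter.mp hz
  refine ⟨z, hzD, ⟨hx, hzD, hzx.symm, hxz, fun w hw hwx hlt' => ?_⟩,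
    hmin y (mem_filter.mpr ⟨hy, hxy, hlt⟩)⟩
  exact hlt'.2.not_ge (hmin w (mem_filter.mpr ⟨hw, hwx, hlt'.1⟩))

variable {p : α → ℕ} {c : ℕ} {a : α}

/-- The track of `x` when `p` numbers the tracks and the track of `a` is diverted to the spare
track `c` ahead of `a`. -/
def detour (β : α → Λ) (p : α → ℕ) (c : ℕ) (a x : α) : ℕ :=
  if β x < β a ∧ p x = p a then c else p x

variable [Fintype α]

/-- The indices on the tracks `0, …, c`, without those that the diverted track replaces. -/
def detourDomain (β : α → Λ) (p : α → ℕ) (c : ℕ) (a : α) : Finset α :=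
  {x | (β x < β a → p x < c) ∧ detour β p c a x ≤ c}

theorem mem_detourDomain {x : α} :
    x ∈ detourDomain β p c a ↔ (β x < β a → p x < c) ∧ detour β p c a x ≤ c := by
  simp [detourDomain]

theorem mem_detourDomain_of_lt {x : α} (hx : p x < c) : x ∈ detourDomain β p c a := by
  grind [mem_detourDomain, detour]

theorem eq_of_detour_eq (hp : ∀ x y, β x = β y → p x = p y → x = y) {x y : α}
    (hx : x ∈ detourDomain β p c a) (hy : y ∈ detourDomain β p c a) (hxy : β x = β y)
    (h : detour β p c a x = detour β p c a y) : x = y := by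
  grind [mem_detourDomain, detour]

theorem not_follows_detour (x : α) :
    ¬ Follows β (detour β p c a) (detourDomain β p c a) x a := by
  rintro ⟨hx, -, hxa, hlt, -⟩
  grind [mem_detourDomain, detour]

theorem exists_detour_eq {i : Λ} (hi : ∀ q ≤ c, ∃ y, β y = i ∧ p y = q) {x : α}
    (hx : x ∈ detourDomain β p c a) (hxi : β x < i) :
    ∃ y ∈ detourDomain β p c a, detour β p c a y = detour β p c a x ∧ β y = i := by
  obtain ⟨hxlt, hxc⟩ := mem_detourDomain.mp hx
  by_cases hia : i < β a
  · have hxp := hxlt (hxi.trans hia)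
    obtain ⟨y, rfl, hy⟩ := hi (p x) hxp.le
    exact ⟨y, mem_detourDomain_of_lt (hy ▸ hxp), by grind [detour], rfl⟩
  · obtain ⟨y, rfl, hy⟩ := hi (detour β p c a x) hxc
    have hdetour : detour β p c a y = p y := if_neg fun h => hia h.1
    exact ⟨y, mem_detourDomain.mpr ⟨fun h => absurd h hia, by omega⟩, by omega, rfl⟩

theorem isConveyor_detour {b : ℕ → Λ} {N : ℕ}
    (hbig : ∀ k, 0 < k → k < N → ∀ q ≤ c, ∃ x, β x = b k ∧ p x = q) :
    IsConveyor (Follows β (detour β p c a) (detourDomain β p c a)) β b N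
      (detourDomain β p c a) := by
  intro x hx k hk hkN hxk
  obtain ⟨y, hy, hyx, hyk⟩ := exists_detour_eq (hbig k hk hkN) hx hxk
  exact hyk ▸ exists_follows hx hy hyx (hyk ▸ hxk)

theorem exists_bijOn_layer (β : α → Λ) :
    ∃ p : α → ℕ, ∀ i, Set.BijOn p (layer β i) (Set.Iio #(layer β i)) := by
  have hex (i : Λ) : ∃ f : α → ℕ, Set.BijOn f (layer β i) (Set.Iio #(layer β i)) := by
    refine (layer β i).finite_toSet.exists_bijOn_of_encard_eq ?_
    rw [Set.encard_coe_eq_coe_finsetCard, ← coe_Iio, Set.encard_coe_eq_coe_finsetCard,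
      Nat.card_Iio]
  choose f hf using hex
  exact ⟨fun x => f (β x) x, fun i => (hf i).congr fun x hx => by rw [mem_layer.mp hx]⟩

theorem exists_lowerFactor_ne_zero_of_row_eq_zero [LinearOrder α] [CommRing R] [IsDomain R]
    {b : ℕ → Λ} {N : ℕ} (hb : ∀ j < N, b j < b (j + 1))
    (hbig : ∀ k, 0 < k → k < N → c < #(layer β (b k)))
    (hsmall : ∀ k < N, ∀ x ∈ gap β b k, #(layer β (β x)) ≤ c) (a : α) :
    ∃ Z : Matrix α α R, (∀ x y, β x ≤ β y → Z x y = 0) ∧ (∀ y, Z a y = 0) ∧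
      ∃ A ⊆ below β (b N), lowerFactor Z β b N A ≠ 0 := by
  obtain ⟨p, hp⟩ := exists_bijOn_layer β
  have hinj (x y : α) (h : β x = β y) (hxy : p x = p y) : x = y :=
    (hp (β y)).injOn (mem_layer.mpr h) (mem_layer.mpr rfl) hxy
  have hattained (k : ℕ) (hk : 0 < k) (hkN : k < N) (q : ℕ) (hq : q ≤ c) :
      ∃ x, β x = b k ∧ p x = q := by
    obtain ⟨x, hx, hxq⟩ := (hp (b k)).surjOn (hq.trans_lt (hbig k hk hkN))
    exact ⟨x, mem_layer.mp hx, hxq⟩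
  have hgap (k : ℕ) (hk : k < N) : gap β b k ⊆ detourDomain β p c a := fun x hx =>
    mem_detourDomain_of_lt (((hp (β x)).mapsTo (mem_layer.mpr rfl)).trans_le (hsmall k hk x hx))
  have hE := follows_biUnique fun x hx y hy => eq_of_detour_eq (c := c) (a := a) hinj hx hy
  have hconveyor := isConveyor_detour (a := a) hattained
  refine ⟨relationMatrix R (Follows β (detour β p c a) (detourDomain β p c a)),
    fun x y h => relationMatrix_of_not_rel fun hyx => hyx.2.2.2.1.not_ge h,
    fun y => relationMatrix_of_not_rel (not_follows_detour y), _, ?_,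
    lowerFactor_relationMatrix_reached_ne_zero hE hb hgap hconveyor le_rfl⟩
  exact (reached_subset_inter_below hE.2 hb hgap hconveyor le_rfl).trans inter_subset_right

end Tracks

section Coprimality

variable {α Λ : Type*} [LinearOrder α] [Fintype α] [LinearOrder Λ]

theorem map_lowerFactor {R S : Type*} [CommRing R] [CommRing S] (φ : R →+* S) (Y : Matrix α α R)
    (β : α → Λ) (b : ℕ → Λ) (k : ℕ) (A : Finset α) :
    φ (lowerFactor Y β b k A) = lowerFactor (Y.map φ) β b k A := by
  induction k generalizing A with
  | zero => simp [lowerFactor, apply_ite φ]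
  | succ k ih =>
    simp only [lowerFactor, map_sum, apply_ite φ, map_mul, map_minor, ih, map_zero]

variable {σ K : Type*} [Field K] {β : α → Λ} {row col : σ → α}
  {Y : Matrix α α (MvPolynomial σ K)} {b : ℕ → Λ} {N c : ℕ} {g : MvPolynomial σ K}

theorem isUnit_of_forall_dvd_lowerFactor [Nonempty α] (hY : IsGenericNilpotent β row col Y)
    (hb : ∀ j < N, b j < b (j + 1)) (hbig : ∀ k, 0 < k → k < N → c < #(layer β (b k)))
    (hsmall : ∀ k < N, ∀ x ∈ gap β b k, #(layer β (β x)) ≤ c)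
    (hg : ∀ A ⊆ below β (b N), g ∣ lowerFactor Y β b N A) : IsUnit g := by
  have hpoint (a : α) : ∃ ξ : σ → K, (∀ v, row v = a → ξ v = 0) ∧
      ∃ A ⊆ below β (b N), eval ξ (lowerFactor Y β b N A) ≠ 0 := by
    obtain ⟨Z, hZ, hZa, A, hAsub, hA⟩ :=
      exists_lowerFactor_ne_zero_of_row_eq_zero (R := K) hb hbig hsmall a
    refine ⟨fun v => Z (row v) (col v), ?_, A, hAsub, ?_⟩
    · rintro v rfl
      exact hZa (col v)
    · rwa [map_lowerFactor, hY.map_eval hZ]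
  obtain ⟨ξ, -, A, hAsub, hA⟩ := hpoint (Classical.arbitrary α)
  have hA0 : lowerFactor Y β b N A ≠ 0 := fun h => hA (by rw [h, map_zero])
  obtain ⟨n, hn⟩ := exists_isWeightedHomogeneous_of_dvd
    (isWeightedHomogeneous_lowerFactor hY.isWeightedHomogeneous β b N A) hA0 (hg A hAsub)
  refine isUnit_of_isWeightedHomogeneous hY.lt (ne_zero_of_dvd_ne_zero hA0 (hg A hAsub)) hn
    fun a => ?_
  obtain ⟨ξ, hξ, B, hBsub, hB⟩ := hpoint a
  exact ⟨ξ, hξ, ne_zero_of_dvd_ne_zero hB (map_dvd (eval ξ) (hg B hBsub))⟩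

theorem reverseMarks_lt_succ (hb : ∀ j < N, b j < b (j + 1)) :
    ∀ j < N, reverseMarks b N j < reverseMarks b N (j + 1) := by
  intro j hj
  have := hb (N - (j + 1)) (by omega)
  rwa [show N - (j + 1) + 1 = N - j by omega] at this

theorem isUnit_of_forall_dvd_lowerFactor_transpose [Nonempty α]
    (hY : IsGenericNilpotent β row col Y) (hb : ∀ j < N, b j < b (j + 1))
    (hbig : ∀ k, 0 < k → k < N → c < #(layer β (b k)))
    (hsmall : ∀ k < N, ∀ x ∈ gap β b k, #(layer β (β x)) ≤ c)
    (hg : ∀ B ⊆ above β (b 0),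
      g ∣ lowerFactor Y.transpose (OrderDual.toDual ∘ β) (reverseMarks b N) N B) :
    IsUnit g := by
  refine isUnit_of_forall_dvd_lowerFactor (c := c) hY.transpose (reverseMarks_lt_succ hb)
    (fun k hk hkN => ?_) (fun k hk x hx => ?_) fun B hB => hg B ?_
  · rw [reverseMarks, layer_toDual]
    exact hbig _ (by omega) (by omega)
  · rw [show k = N - (N - (k + 1) + 1) by omega, gap_toDual (by omega)] at hx
    rw [Function.comp_apply, layer_toDual]
    exact hsmall _ (by omega) x hx
  · rwa [reverseMarks, Nat.sub_self, below_toDual] at hB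

end Coprimality

section GreatestCommonDivisor

theorem dvd_of_forall_dvd_mul {S ι : Type*} [CommRing S] [IsDomain S]
    [UniqueFactorizationMonoid S] {s : Finset ι} {u : ι → S}
    (hu : ∀ g, (∀ i ∈ s, g ∣ u i) → IsUnit g) {g h : S} (hg : ∀ i ∈ s, g ∣ h * u i) : g ∣ h := by
  obtain ⟨_⟩ : Nonempty (NormalizedGCDMonoid S) := inferInstance
  have hunit : IsUnit (s.gcd u) := hu _ fun i => gcd_dvd
  exact hunit.dvd_mul_right.mp ((dvd_gcd hg).trans (gcd_mul_left' s u h).dvd)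

theorem gapCard_toDual {α Λ : Type*} [Fintype α] [LinearOrder Λ] (β : α → Λ) (b : ℕ → Λ)
    (N : ℕ) : gapCard (OrderDual.toDual ∘ β) (reverseMarks b N) N = gapCard β b N := by
  rw [gapCard, gapCard, ← sum_range_reflect]
  refine sum_congr rfl fun j hj => ?_
  rw [Nat.sub_sub, Nat.add_comm 1, gap_toDual (mem_range.mp hj)]

variable {α Λ R : Type*} [LinearOrder α] [Fintype α] [LinearOrder Λ] [CommRing R]
  {β : α → Λ} {b : ℕ → Λ} {N : ℕ}

theorem card_of_lowerFactor_ne_zero {Y : Matrix α α R} {A : Finset α}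
    (hA : lowerFactor Y β b N A ≠ 0) : #A = gapCard β b N := by
  induction N generalizing A with
  | zero => simpa [gapCard] using (ite_ne_right_iff.mp hA).1
  | succ k ih =>
    rw [lowerFactor] at hA
    obtain ⟨L, -, hL⟩ := exists_ne_zero_of_sum_ne_zero hA
    obtain ⟨hgap, hne⟩ := ite_ne_right_iff.mp hL
    have hcard : #L = #(A \ gap β b k) := not_not.mp
      (mt (minor_of_card_ne Y) (left_ne_zero_of_mul hne))
    rw [← card_sdiff_add_card_eq_card hgap, ← hcard, ih (right_ne_zero_of_mul hne), gapCard_succ]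

theorem middleFactor_dvd_minor_pow {Y : Matrix α α R} (hβ : Monotone β)
    (hY : ∀ x y, β x ≤ β y → Y x y = 0) (hb : ∀ j < N, b j < b (j + 1)) (hb₀ : ∀ x, b 0 ≤ β x)
    (hbN : ∀ x, β x ≤ b N) (hends : #(layer β (b N)) = #(layer β (b 0))) {I : Finset α}
    (hI : #I = gapCard β b N + #(layer β (b 0))) (J : Finset α) :
    middleFactor Y β b N (layer β (b N)) ∣ minor (Y ^ N) I J := by
  by_cases h : minor (Y ^ N) I J = 0
  · exact h ▸ dvd_zero _
  have hbelow := (card_inter_le_of_minor_pow_ne_zero hY hb hb₀ h).1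
  have hlayer := card_le_card (inter_subset_right (s₁ := I) (s₂ := layer β (b N)))
  have hunion : I ∩ below β (b N) ∪ I ∩ layer β (b N) = I := by
    ext x
    simp [← and_or_left, ← le_iff_lt_or_eq, hbN]
  have hcard : #(I ∩ below β (b N)) + #(I ∩ layer β (b N)) = #I := by
    rw [← card_union_of_disjoint (by grind [disjoint_left]), hunion]
  have hcontains : I ∩ layer β (b N) = layer β (b N) :=
    eq_of_subset_of_card_le inter_subset_right (by omega)
  have hfactor := minor_pow_eq_mul hβ hY hb hb₀ J inter_subset_right Subset.rfl
    (empty_subset (above β (b N))) (L := I ∩ below β (b N)) (by omega) hends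
  rw [union_empty, ← hcontains, hunion, hcontains] at hfactor
  rw [hfactor, mul_right_comm]
  exact dvd_mul_left _ _

theorem minor_pow_union_union {Y : Matrix α α R} (hβ : Monotone β)
    (hY : ∀ x y, β x ≤ β y → Y x y = 0) (hb : ∀ j < N, b j < b (j + 1)) (hb₀ : ∀ x, b 0 ≤ β x)
    (hbN : ∀ x, β x ≤ b N) (hends : #(layer β (b N)) = #(layer β (b 0))) {A B : Finset α}
    (hA : A ⊆ below β (b N)) (hAcard : #A = gapCard β b N) (hB : B ⊆ above β (b 0)) :
    minor (Y ^ N) (A ∪ layer β (b N)) (layer β (b 0) ∪ B) =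
      middleFactor Y β b N (layer β (b N)) * lowerFactor Y β b N A *
        lowerFactor Y.transpose (OrderDual.toDual ∘ β) (reverseMarks b N) N B := by
  have h := minor_pow_eq_mul hβ hY hb hb₀ (layer β (b 0) ∪ B) hA Subset.rfl
    (empty_subset (above β (b N))) hAcard hends
  rwa [union_empty, upperFactor_empty Y hbN hB, mul_comm (lowerFactor _ _ _ _ _)] at h

theorem dvd_middleFactor {σ K : Type*} [Field K] [Nonempty α] {row col : σ → α}
    {Y : Matrix α α (MvPolynomial σ K)} (hY : IsGenericNilpotent β row col Y)
    (hβ : Monotone β) (hb : ∀ j < N, b j < b (j + 1)) (hb₀ : ∀ x, b 0 ≤ β x)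
    (hbN : ∀ x, β x ≤ b N) (hends : #(layer β (b N)) = #(layer β (b 0))) {c : ℕ}
    (hbig : ∀ k, 0 < k → k < N → c < #(layer β (b k)))
    (hsmall : ∀ k < N, ∀ x ∈ gap β b k, #(layer β (β x)) ≤ c) {g : MvPolynomial σ K}
    (hg : ∀ I J : Finset α, #I = gapCard β b N + #(layer β (b 0)) →
      #J = gapCard β b N + #(layer β (b 0)) → g ∣ minor (Y ^ N) I J) :
    g ∣ middleFactor Y β b N (layer β (b N)) := by
  have hproduct {A B : Finset α} (hA : A ⊆ below β (b N)) (hB : B ⊆ above β (b 0)) :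
      g ∣ middleFactor Y β b N (layer β (b N)) * lowerFactor Y β b N A *
        lowerFactor Y.transpose (OrderDual.toDual ∘ β) (reverseMarks b N) N B := by
    by_cases hA0 : lowerFactor Y β b N A = 0
    · simp [hA0]
    by_cases hB0 : lowerFactor Y.transpose (OrderDual.toDual ∘ β) (reverseMarks b N) N B = 0
    · simp [hB0]
    have hAcard := card_of_lowerFactor_ne_zero hA0
    have hBcard := card_of_lowerFactor_ne_zero hB0
    rw [gapCard_toDual] at hBcard
    rw [← minor_pow_union_union hβ hY.eq_zero hb hb₀ hbN hends hA hAcard hB]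
    refine hg _ _ ?_ ?_
    · rw [card_union_of_disjoint (by grind [disjoint_left]), hAcard, hends]
    · rw [card_union_of_disjoint (by grind [disjoint_left]), hBcard, add_comm]
  refine dvd_of_forall_dvd_mul (s := (below β (b N)).powerset) (u := lowerFactor Y β b N)
    (fun g' hg' => isUnit_of_forall_dvd_lowerFactor hY hb hbig hsmall fun A hA =>
      hg' A (mem_powerset.mpr hA)) fun A hA => ?_
  exact dvd_of_forall_dvd_mul (s := (above β (b 0)).powerset)
    (fun g' hg' => isUnit_of_forall_dvd_lowerFactor_transpose hY hb hbig hsmall fun B hB =>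
      hg' B (mem_powerset.mpr hB))
    fun B hB => hproduct (mem_powerset.mp hA) (mem_powerset.mp hB)

end GreatestCommonDivisor

section BenloloSandersonElement

theorem exists_det_submatrix_equiv_equiv {ι κ R : Type*} [Fintype ι] [DecidableEq ι] [Fintype κ]
    [DecidableEq κ] [CommRing R] (M : Matrix κ κ R) (e e' : ι ≃ κ) :
    ∃ ε : ℤˣ, (M.submatrix e e').det = ε • M.det := by
  refine ⟨Equiv.Perm.sign (e'.trans e.symm), ?_⟩
  rw [← Matrix.det_submatrix_equiv_self e M, Units.smul_def, zsmul_eq_mul,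
    ← Matrix.det_permute', Matrix.submatrix_submatrix]
  congr
  ext
  simp

/-- The increasing enumeration of the indices `a, …, a + k - 1`. -/
def finInterval {n k : ℕ} (a : ℕ) (h : a + k ≤ n) (i : Fin k) : Fin n :=
  ⟨a + i, by omega⟩

theorem strictMono_finInterval {n k a : ℕ} (h : a + k ≤ n) : StrictMono (finInterval a h) :=
  fun _ _ hij => Nat.add_lt_add_left hij a

theorem image_finInterval {n k a : ℕ} (h : a + k ≤ n) {S : Finset (Fin n)}
    (hS : ∀ x, x ∈ S ↔ a ≤ x.1 ∧ x.1 < a + k) : univ.image (finInterval a h) = S := by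
  ext x
  simp only [mem_image, mem_univ, true_and, hS, finInterval, Fin.ext_iff]
  exact ⟨fun ⟨i, hi⟩ => by omega, fun hx => ⟨⟨x - a, by omega⟩, Nat.add_sub_of_le hx.1⟩⟩

variable {c : ℕ → ℕ} {l n m q : ℕ}

/-- Moving the first `c 1` columns of `Mmat` to the end puts `t` on the diagonal. -/
theorem Mmat_submatrix (hm : m + c 1 = n) (hq : dBS c l + q + c 1 = m) :
    (Mmat c n m hm).submatrix (finSumFinEquiv.trans (finCongr hq))
        ((Equiv.sumComm (Fin (dBS c l + q)) _).trans
          (finSumFinEquiv.trans (finCongr (by omega)))) =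
      ((genX c n).submatrix
        (Sum.elim (finInterval (c 1) (by omega)) (finInterval m (by omega)))
        (Sum.elim (finInterval (c 1) (by omega)) (finInterval 0 (by omega)))).map Polynomial.C +
          Matrix.diagonal (Sum.elim (fun _ => Polynomial.X) 0) := by
  ext1 i j
  have hrow : Fin.cast hm ((finCongr hq (finSumFinEquiv i)).addNat (c 1)) =
      Sum.elim (finInterval (c 1) (by omega)) (finInterval m (by omega)) i := by
    rcases i with i | i <;> simp [Fin.ext_iff, finInterval] <;> omega
  have hcol : Fin.castLE (show m ≤ n by omega)
      (finCongr (show c 1 + (dBS c l + q) = m by omega) (finSumFinEquiv j.swap)) =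
      Sum.elim (finInterval (c 1) (by omega)) (finInterval 0 (by omega)) j := by
    rcases j with j | j <;> simp [Fin.ext_iff, finInterval]
  simp only [Mmat, Matrix.submatrix_apply, Matrix.of_apply, Equiv.trans_apply,
    Equiv.sumComm_apply, hrow, hcol, Matrix.add_apply, Matrix.map_apply, Matrix.diagonal_apply]
  congr 1
  rcases i with i | i <;> rcases j with j | j <;> simp [Fin.ext_iff, finInterval] <;> omega

theorem exists_BSf_eq_smul_sum_minor (hm : m + c 1 = n) (hq : dBS c l + q + c 1 = m)
    {F M L : Finset (Fin n)} (hF : ∀ x, x ∈ F ↔ x.1 < c 1)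
    (hM : ∀ x, x ∈ M ↔ c 1 ≤ x.1 ∧ x.1 < m) (hL : ∀ x, x ∈ L ↔ m ≤ x.1) :
    ∃ ε : ℤˣ, BSf c l n m hm =
      ε • ∑ S ∈ powersetCard q M, minor (genX c n) (S ∪ L) (F ∪ S) := by
  obtain ⟨ε, hε⟩ := exists_det_submatrix_equiv_equiv (Mmat c n m hm)
    (finSumFinEquiv.trans (finCongr hq))
    ((Equiv.sumComm (Fin (dBS c l + q)) _).trans (finSumFinEquiv.trans (finCongr (by omega))))
  obtain ⟨δ, hδ⟩ := exists_coeff_det_add_diagonal_X_eq_smul_sum_minor (genX c n)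
    (strictMono_finInterval (k := dBS c l + q) (a := c 1) (by omega))
    (strictMono_finInterval (a := m) hm.le)
    (strictMono_finInterval (k := c 1) (a := 0) (by omega))
    (fun i j => Fin.lt_def.mpr (by simp only [finInterval]; omega))
    (fun j i => Fin.lt_def.mpr (by simp only [finInterval]; omega))
  rw [image_finInterval _ fun x => (hM x).trans (by omega),
    image_finInterval _ fun x => (hL x).trans (by omega),
    image_finInterval _ fun x => (hF x).trans (by omega), ← Mmat_submatrix hm hq, hε,
    Polynomial.coeff_smul] at hδ
  exact ⟨ε⁻¹ * δ, by rw [mul_smul, ← hδ, inv_smul_smul, BSf]⟩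

end BenloloSandersonElement

section Marks

/-- The `k`-th (counting from `0`) of the blocks among the first `l` that are at least as large
as the first block. -/
def mark (c : ℕ → ℕ) (l k : ℕ) : ℕ := Nat.nth (fun i => i ∈ Icc 1 l ∧ c 1 ≤ c i) k

variable {c : ℕ → ℕ} {l r : ℕ}

theorem mark_zero (hl : 2 ≤ l) : mark c l 0 = 1 := by
  rw [mark, Nat.nth_zero_of_exists ⟨1, by simp; omega⟩, Nat.find_eq_iff]
  simp
  omega

theorem mark_card_add_one (hl : 2 ≤ l) (hcl : c l = c 1)
    (hcne : ∀ j, 1 < j → j < l → c j ≠ c 1) :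
    mark c l (#{i ∈ Icc 1 l | c 1 < c i} + 1) = l := by
  have hlarge : {i ∈ range l | i ∈ Icc 1 l ∧ c 1 ≤ c i} =
      insert 1 {i ∈ Icc 1 l | c 1 < c i} := by
    grind
  rw [← card_insert_of_notMem (a := 1) (by simp), ← hlarge, ← Nat.count_eq_card_filter_range, mark,
    Nat.nth_count (p := fun i => i ∈ Icc 1 l ∧ c 1 ≤ c i) (by simp [hcl]; omega)]

theorem mark_lt_mark (hr : mark c l r ≠ 0) {j k : ℕ} (hjk : j < k) (hk : k ≤ r) :
    mark c l j < mark c l k :=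
  Nat.nth_lt_nth' hjk fun hf => hk.trans_lt (Nat.lt_card_toFinset_of_nth_ne_zero hr hf)

theorem mark_mem (hr : mark c l r ≠ 0) {k : ℕ} (hk : k ≤ r) :
    mark c l k ∈ Icc 1 l ∧ c 1 ≤ c (mark c l k) :=
  Nat.nth_mem k fun hf => hk.trans_lt (Nat.lt_card_toFinset_of_nth_ne_zero hr hf)

end Marks

section Blocks

variable {c : ℕ → ℕ} {l n m r : ℕ}

theorem blkSum_zero (c : ℕ → ℕ) : blkSum c 0 = 0 := by simp [blkSum]

theorem blkSum_succ (c : ℕ → ℕ) (j : ℕ) : blkSum c (j + 1) = blkSum c j + c (j + 1) :=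
  sum_Icc_succ_top (by omega) _

theorem monotone_blkSum (c : ℕ → ℕ) : Monotone (blkSum c) :=
  fun _ _ h => sum_le_sum_of_subset (Icc_subset_Icc_right h)

theorem blk_le_iff {a j : ℕ} (ha : a ≤ blkSum c l) : blk c a ≤ j ↔ a ≤ blkSum c j :=
  ⟨fun h => (Nat.sInf_mem (s := {j | a ≤ blkSum c j}) ⟨l, ha⟩).trans (monotone_blkSum c h),
    fun h => Nat.sInf_le h⟩

/-- The block of an index, where `x : Fin n` stands for `x + 1 ∈ {1, …, n}`. -/
def level (c : ℕ → ℕ) (n : ℕ) (x : Fin n) : ℕ := blk c (x.1 + 1)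

theorem level_le_iff (hn : n = blkSum c l) {x : Fin n} {j : ℕ} :
    level c n x ≤ j ↔ x.1 < blkSum c j :=
  blk_le_iff (l := l) (by omega)

theorem level_mem_Icc (hn : n = blkSum c l) (x : Fin n) : level c n x ∈ Icc 1 l := by
  have h₀ := level_le_iff hn (x := x) (j := 0)
  have hl := level_le_iff hn (x := x) (j := l)
  rw [blkSum_zero] at h₀
  rw [mem_Icc]
  omega

theorem monotone_level (hn : n = blkSum c l) : Monotone (level c n) := fun _ _ h =>
  (level_le_iff hn).mpr ((Fin.le_def.mp h).trans_lt ((level_le_iff hn).mp le_rfl))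

theorem card_layer_level (hn : n = blkSum c l) {i : ℕ} (hi : i ∈ Icc 1 l) :
    #(layer (level c n) i) = c i := by
  obtain ⟨hi₁, hil⟩ := mem_Icc.mp hi
  obtain ⟨j, rfl⟩ := Nat.exists_eq_add_of_le' hi₁
  have hle := hn ▸ monotone_blkSum c hil
  have hmap : (layer (level c n) (j + 1)).map Fin.valEmbedding =
      Ico (blkSum c j) (blkSum c (j + 1)) := by
    ext a
    simp only [mem_map, mem_layer, Fin.valEmbedding_apply, mem_Ico]
    have hlevel (x : Fin n) : level c n x = j + 1 ↔ blkSum c j ≤ x.1 ∧ x.1 < blkSum c (j + 1) := by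
      rw [← not_lt, ← level_le_iff hn, ← level_le_iff hn]
      omega
    simp only [hlevel]
    exact ⟨by rintro ⟨x, hx, rfl⟩; omega, fun ha => ⟨⟨a, by omega⟩, ha, rfl⟩⟩
  rw [← card_map Fin.valEmbedding, hmap, Nat.card_Ico, blkSum_succ, Nat.add_sub_cancel_left]

theorem card_filter_level (hn : n = blkSum c l) (p : ℕ → Prop) [DecidablePred p] :
    #{x | p (level c n x)} = ∑ i ∈ Icc 1 l with p i, c i := by
  rw [card_eq_sum_card_fiberwise (f := level c n) (t := {i ∈ Icc 1 l | p i})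
    fun x hx => by simpa only [mem_coe, mem_filter, mem_univ, true_and, level_mem_Icc hn] using hx]
  refine sum_congr rfl fun i hi => ?_
  rw [← card_layer_level hn (mem_filter.mp hi).1]
  congr 1
  grind

theorem isGenericNilpotent_genX (hn : n = blkSum c l) :
    IsGenericNilpotent (level c n) (fun v : Pos c n => v.1.1) (fun v => v.1.2) (genX c n) where
  eq_zero _ _ h := dif_neg fun h' => h'.2.not_ge h
  eq_X _ _ h :=
    have hxy := And.intro ((monotone_level hn).reflect_lt h) h
    ⟨⟨_, hxy⟩, rfl, rfl, dif_pos hxy⟩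
  lt v := v.2.2

theorem level_eq_one_iff (hn : n = blkSum c l) {x : Fin n} : level c n x = 1 ↔ x.1 < c 1 := by
  have h := level_le_iff hn (x := x) (j := 1)
  have hsum := blkSum_succ c 0
  have h₁ := mem_Icc.mp (level_mem_Icc hn x)
  rw [blkSum_zero, zero_add] at hsum
  omega

theorem level_lt_last_iff (hn : n = blkSum c l) (hl : 0 < l) (hm : m + c l = n)
    {x : Fin n} : level c n x < l ↔ x.1 < m := by
  have hsum := blkSum_succ c (l - 1)
  rw [Nat.sub_add_cancel hl] at hsum
  rw [Nat.lt_iff_le_pred hl, level_le_iff hn]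
  omega

theorem size_level_lt_of_mem_gap (hn : n = blkSum c l) {k : ℕ} {x : Fin n}
    (hx : x ∈ gap (level c n) (mark c l) k) : c (level c n x) < c 1 := by
  by_contra! hle
  rw [mem_gap] at hx
  exact hx.1.not_ge (Nat.le_nth_of_lt_nth_succ hx.2 ⟨level_mem_Icc hn x, hle⟩)

theorem sum_filter_le_eq_sum_filter_lt_add (hl : 2 ≤ l) (hcl : c l = c 1)
    (hcne : ∀ j, 1 < j → j < l → c j ≠ c 1) :
    ∑ i ∈ Icc 1 l with c i ≤ c 1, c i = ∑ i ∈ Icc 1 l with c i < c 1, c i + 2 * c 1 := by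
  have hinsert : {i ∈ Icc 1 l | c i ≤ c 1} = insert 1 (insert l {i ∈ Icc 1 l | c i < c 1}) := by
    grind
  rw [hinsert, sum_insert (by simp; omega), sum_insert (by simp [hcl]), hcl]
  omega

theorem blkSum_eq_dBS_add (c : ℕ → ℕ) (l : ℕ) :
    blkSum c l = dBS c l + ∑ i ∈ Icc 1 l with c i ≤ c 1, c i +
      #{i ∈ Icc 1 l | c 1 < c i} * c 1 := by
  have hmin : ∑ i ∈ Icc 1 l, min (c i) (c 1) =
      ∑ i ∈ Icc 1 l with c i ≤ c 1, c i + #{i ∈ Icc 1 l | c 1 < c i} * c 1 := by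
    simp [min_def, sum_ite]
  rw [add_assoc, ← hmin, blkSum, dBS, ← sum_add_distrib]
  exact sum_congr rfl fun i _ => by omega

theorem mark_zero_le_level (hn : n = blkSum c l) (hl : 2 ≤ l) (x : Fin n) :
    mark c l 0 ≤ level c n x :=
  mark_zero hl ▸ (mem_Icc.mp (level_mem_Icc hn x)).1

theorem level_le_mark_last (hn : n = blkSum c l) (hlast : mark c l r = l) (x : Fin n) :
    level c n x ≤ mark c l r :=
  hlast.symm ▸ (mem_Icc.mp (level_mem_Icc hn x)).2

theorem card_layer_mark_zero (hn : n = blkSum c l) (hl : 2 ≤ l) :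
    #(layer (level c n) (mark c l 0)) = c 1 := by
  rw [mark_zero hl, card_layer_level hn (by simp; omega)]

theorem card_layer_mark_last (hn : n = blkSum c l) (hl : 2 ≤ l) (hcl : c l = c 1)
    (hlast : mark c l r = l) :
    #(layer (level c n) (mark c l r)) = #(layer (level c n) (mark c l 0)) := by
  rw [card_layer_mark_zero hn hl, hlast, card_layer_level hn (by simp; omega), hcl]

theorem gapCard_level_mark (hn : n = blkSum c l) (hl : 2 ≤ l) (hcl : c l = c 1)
    (hlast : mark c l r = l) :
    gapCard (level c n) (mark c l) r = ∑ i ∈ Icc 1 l with c i < c 1, c i := by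
  have hr : mark c l r ≠ 0 := by omega
  rw [← card_filter_level hn, gapCard_eq_card_inter_below
    (fun j hj => mark_lt_mark hr j.lt_succ_self hj)
    (mark_zero_le_level hn hl) (C := {x | c (level c n x) < c 1})
    (fun j _ x hx => mem_filter.mpr ⟨mem_univ x, size_level_lt_of_mem_gap hn hx⟩)
    fun j hj => disjoint_left.mpr fun x hx hx' => ?_]
  · congr 1
    refine inter_eq_left.mpr fun x hx => ?_
    have hle := (mem_Icc.mp (level_mem_Icc hn x)).2
    grind
  · have := (mark_mem hr hj.le).2
    grind

theorem associated_BSf_middleFactor (hn : n = blkSum c l) (hm : m + c 1 = n) (hl : 2 ≤ l)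
    (hcl : c l = c 1) (hcne : ∀ j, 1 < j → j < l → c j ≠ c 1)
    (hr : r = #{i ∈ Icc 1 l | c 1 < c i}) (hlast : mark c l (r + 1) = l) :
    Associated (BSf c l n m hm) (middleFactor (genX c n) (level c n) (mark c l) (r + 1)
      (layer (level c n) (mark c l (r + 1)))) := by
  have hY := isGenericNilpotent_genX hn
  have hfirst := card_layer_mark_zero hn hl
  have hq : dBS c l + (gapCard (level c n) (mark c l) (r + 1) + r * c 1) + c 1 = m := by
    have hsum := blkSum_eq_dBS_add c l
    rw [sum_filter_le_eq_sum_filter_lt_add hl hcl hcne, ← gapCard_level_mark hn hl hcl hlast,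
      ← hr] at hsum
    omega
  have hlt (x : Fin n) : level c n x < l ↔ x.1 < m :=
    level_lt_last_iff hn (by omega) (hcl ▸ hm)
  obtain ⟨ε, hε⟩ := exists_BSf_eq_smul_sum_minor hm hq (F := layer (level c n) (mark c l 0))
    (M := below (level c n) l \ layer (level c n) (mark c l 0)) (L := layer (level c n) l)
    (fun x => by rw [mem_layer, mark_zero hl, level_eq_one_iff hn])
    (fun x => by simp [mark_zero hl, level_eq_one_iff hn, hlt, and_comm])
    (fun x => by have := hlt x; have := mem_Icc.mp (level_mem_Icc hn x); simp; omega)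
  have hmiddle := middleFactor_succ_eq_sum (monotone_level hn) hY.eq_zero
    (k := r) (fun j hj => mark_lt_mark (r := r + 1) (by omega) j.lt_succ_self hj)
    (mark_zero_le_level hn hl) (E := layer (level c n) (mark c l (r + 1))) subset_rfl
    (card_layer_mark_last hn hl hcl hlast)
  rw [hfirst, hlast] at hmiddle
  rw [hε, hlast, ← hmiddle]
  rcases Int.units_eq_one_or ε with rfl | rfl
  · rw [one_smul]
  · rw [Units.neg_smul, one_smul]
    exact (Associated.refl _).neg_left

theorem middleFactor_dvd_minor_genX_pow (hn : n = blkSum c l) (hl : 2 ≤ l) (hcl : c l = c 1)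
    (hlast : mark c l (r + 1) = l) {I : Finset (Fin n)}
    (hI : #I = gapCard (level c n) (mark c l) (r + 1) + #(layer (level c n) (mark c l 0)))
    (J : Finset (Fin n)) :
    middleFactor (genX c n) (level c n) (mark c l) (r + 1) (layer (level c n) (mark c l (r + 1))) ∣
      minor (genX c n ^ (r + 1)) I J :=
  middleFactor_dvd_minor_pow (b := mark c l) (N := r + 1) (monotone_level hn)
    (isGenericNilpotent_genX hn).eq_zero
    (fun j hj => mark_lt_mark (r := r + 1) (by omega) j.lt_succ_self hj) (mark_zero_le_level hn hl)
    (level_le_mark_last hn hlast) (card_layer_mark_last hn hl hcl hlast) hI J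

theorem dvd_middleFactor_genX [NeZero n] (hn : n = blkSum c l) (hl : 2 ≤ l)
    (hcl : c l = c 1) (hcne : ∀ j, 1 < j → j < l → c j ≠ c 1) (hlast : mark c l (r + 1) = l)
    {g : MvPolynomial (Pos c n) ℂ}
    (hg : ∀ I J : Finset (Fin n),
      #I = gapCard (level c n) (mark c l) (r + 1) + #(layer (level c n) (mark c l 0)) →
      #J = gapCard (level c n) (mark c l) (r + 1) + #(layer (level c n) (mark c l 0)) →
      g ∣ minor (genX c n ^ (r + 1)) I J) :
    g ∣ middleFactor (genX c n) (level c n) (mark c l) (r + 1)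
      (layer (level c n) (mark c l (r + 1))) := by
  have hlt {j k : ℕ} (hjk : j < k) (hk : k ≤ r + 1) : mark c l j < mark c l k :=
    mark_lt_mark (by omega) hjk hk
  have hbig (k : ℕ) (hk₀ : 0 < k) (hk : k < r + 1) : c 1 < #(layer (level c n) (mark c l k)) := by
    obtain ⟨hmem, hle⟩ := mark_mem (c := c) (l := l) (r := r + 1) (by omega) hk.le
    rw [card_layer_level hn hmem]
    exact hle.lt_of_ne' (hcne _ (mark_zero hl ▸ hlt hk₀ hk.le) ((hlt hk le_rfl).trans_eq hlast))
  exact dvd_middleFactor (isGenericNilpotent_genX hn) (monotone_level hn)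
    (fun j hj => hlt j.lt_succ_self hj) (mark_zero_le_level hn hl)
    (level_le_mark_last hn hlast) (card_layer_mark_last hn hl hcl hlast) hbig
    (fun k _ x hx => by
      rw [card_layer_level hn (level_mem_Icc hn x)]
      exact (size_level_lt_of_mem_gap hn hx).le) hg

end Blocks

/-- Proposition 3.16 / 3.17: the Benlolo–Sanderson element `f` is a greatest common divisor
of the `(s+c) × (s+c)` minors of the matrix power `𝒳^(r+1)`. -/
theorem BS_element_is_gcd_of_minors
    (l : ℕ) (hl : 2 ≤ l) (c : ℕ → ℕ) (hc : ∀ i ∈ Finset.Icc 1 l, 0 < c i)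
    (hcl : c l = c 1) (n : ℕ) (hn : n = blkSum c l) (m : ℕ) (hm : m + c 1 = n)
    (hcne : ∀ j, 1 < j → j < l → c j ≠ c 1)
    (r s : ℕ) (hr : r = ((Finset.Icc 1 l).filter fun i => c 1 < c i).card)
    (hs : s = (∑ i ∈ (Finset.Icc 1 l).filter (fun i => c i ≤ c 1), c i) - 2 * c 1) :
    (∀ ρ κ : Fin (s + c 1) → Fin n, StrictMono ρ → StrictMono κ →
        BSf c l n m hm ∣ ((genX c n ^ (r + 1)).submatrix ρ κ).det) ∧
    (∀ g : MvPolynomial (Pos c n) ℂ,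
        (∀ ρ κ : Fin (s + c 1) → Fin n, StrictMono ρ → StrictMono κ →
          g ∣ ((genX c n ^ (r + 1)).submatrix ρ κ).det) →
        g ∣ BSf c l n m hm) := by
  have hlast : mark c l (r + 1) = l := hr ▸ mark_card_add_one hl hcl hcne
  have hcard : gapCard (level c n) (mark c l) (r + 1) + #(layer (level c n) (mark c l 0)) =
      s + c 1 := by
    rw [gapCard_level_mark hn hl hcl hlast, card_layer_mark_zero hn hl, hs,
      sum_filter_le_eq_sum_filter_lt_add hl hcl hcne, Nat.add_sub_cancel]
  have hf := associated_BSf_middleFactor hn hm hl hcl hcne hr hlast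
  refine ⟨fun ρ κ hρ hκ => ?_, fun g hg => ?_⟩
  · rw [hf.dvd_iff_dvd_left, ← minor_image _ hρ hκ]
    refine middleFactor_dvd_minor_genX_pow hn hl hcl hlast ?_ _
    rw [hcard, card_image_of_injective _ hρ.injective, card_fin]
  · rw [hf.dvd_iff_dvd_right]
    have hpos : 0 < c 1 := hc 1 (by simp; omega)
    have : NeZero n := ⟨by omega⟩
    refine dvd_middleFactor_genX hn hl hcl hcne hlast fun I J hI hJ => ?_
    rw [minor_eq_det _ (hI.trans hcard) (hJ.trans hcard)]
    exact hg _ _ (OrderEmbedding.strictMono _) (OrderEmbedding.strictMono _)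

end
end

section
/- Let K be a field, σ a type, and f ∈ K[x_i : i ∈ σ] a multilinear polynomial, i.e., the degree of f in each single variable x_i is at most 1. Then the principal ideal generated by f is a radical ideal of the polynomial ring K[x_i : i ∈ σ]. -/
/-!
If `g ^ 2 ∣ f ≠ 0` over a domain, then `2 * deg_i g ≤ deg_i f ≤ 1` for every variable `x_i`, so `g`
is constant. Hence over a field every nonzero multilinear polynomial is squarefree, and in a unique
factorization domain squarefree elements generate radical ideals. Over a general unique
factorization domain, square constant factors must be excluded separately.
-/

open MvPolynomial

theorem eq_C_coeff_zero_of_forall_degreeOf_eq_zero {R σ : Type*} [CommSemiring R]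
    {p : MvPolynomial σ R} (hp : ∀ i, p.degreeOf i = 0) : p = C (p.coeff 0) := by
  refine vars_eq_empty_iff_eq_C.mp (Finset.eq_empty_of_forall_notMem fun i hi ↦ ?_)
  exact mem_vars_iff_degreeOf_ne_zero.mp hi (hp i)

section Squarefree

variable {R σ : Type*} [CommSemiring R] [NoZeroDivisors R] {f g : MvPolynomial σ R}

theorem degreeOf_eq_zero_of_mul_self_dvd {i : σ} (hf₀ : f ≠ 0) (hf : f.degreeOf i ≤ 1)
    (hgf : g * g ∣ f) : g.degreeOf i = 0 := by
  obtain ⟨q, rfl⟩ := hgf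
  have hgg : g * g ≠ 0 := left_ne_zero_of_mul hf₀
  have hg : g ≠ 0 := left_ne_zero_of_mul hgg
  rw [degreeOf_mul_eq hgg (right_ne_zero_of_mul hf₀), degreeOf_mul_eq hg hg] at hf
  lia

theorem squarefree_iff_forall_C_of_degreeOf_le_one (hf₀ : f ≠ 0) (hf : ∀ i, f.degreeOf i ≤ 1) :
    Squarefree f ↔ ∀ r : R, C r * C r ∣ f → IsUnit r := by
  refine ⟨fun h r hr ↦ by simpa using (h (C r) hr).map constantCoeff, fun h g hg ↦ ?_⟩
  have hgC : g = C (g.coeff 0) := eq_C_coeff_zero_of_forall_degreeOf_eq_zero fun i ↦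
    degreeOf_eq_zero_of_mul_self_dvd hf₀ (hf i) hg
  rw [hgC] at hg ⊢
  exact (h _ hg).map C

end Squarefree

theorem span_singleton_multilinear_isRadical_general
    {R : Type*} [CommRing R] [IsDomain R] [UniqueFactorizationMonoid R] {σ : Type*}
    (f : MvPolynomial σ R) (hf : ∀ i, f.degreeOf i ≤ 1)
    (hC : ∀ r : R, r ≠ 0 → C r * C r ∣ f → IsUnit r) :
    (Ideal.span {f}).IsRadical := by
  rw [← isRadical_iff_span_singleton, isRadical_iff_squarefree_or_zero, or_iff_not_imp_right]
  intro hf₀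
  refine (squarefree_iff_forall_C_of_degreeOf_le_one hf₀ hf).mpr fun r hr ↦ hC r ?_ hr
  rintro rfl
  exact hf₀ (by simpa using hr)

/-- Proposition 3.3 (i): a multilinear polynomial (degree at most 1 in each variable)
over a field generates a radical (i.e. semiprime) principal ideal. -/
theorem span_singleton_multilinear_isRadical
    {K : Type*} [Field K] {σ : Type*} (f : MvPolynomial σ K)
    (hf : ∀ i : σ, MvPolynomial.degreeOf i f ≤ 1) :
    (Ideal.span ({f} : Set (MvPolynomial σ K))).IsRadical :=
  span_singleton_multilinear_isRadical_general f hf fun _ hr _ ↦ hr.isUnit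
end

section
/- For each i ∈ {1,…,n−1} let D_i be the unique ℂ-derivation of B with D_i(x_{rs}) = [r = i+1]·x_{is} − [s = i]·x_{r,i+1} for all variables x_{rs} (the Poisson bracket with the coordinate function x_{i,i+1} on gl_n). Then for every i ∈ {1,…,n−1} with i ≠ c and i ≠ n−c, the polynomial obtained by applying D_i to each coefficient of det M(t) ∈ B[t] lies in the ideal of B[t] generated by det M(t) together with the variables x_{ab} with blk(a) ≤ blk(b) (the coordinates of the parabolic subalgebra p). -/
open Finset MvPolynomial

noncomputable section

/-- The polynomial ring `B = ℂ[x_{ab} : 1 ≤ a, b ≤ n]` in all `n²` variables;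
the variable `x_{ab}` (1-indexed) is `X (a-1, b-1)` (0-indexed). -/
abbrev Bring (n : ℕ) : Type := MvPolynomial (Fin n × Fin n) ℂ

/-- The generic matrix `𝒳` of the nilradical: `(a,b)` entry `x_{ab}` if `blk a > blk b`,
and `0` otherwise. -/
def genXB (c : ℕ → ℕ) (n : ℕ) : Matrix (Fin n) (Fin n) (Bring n) :=
  Matrix.of fun a b =>
    if blk c (b.1 + 1) < blk c (a.1 + 1) then X (a, b) else 0

/-- The matrix `M(t)`: the `(n-c) × (n-c)` submatrix of `𝒳 + t · Id` consisting of
rows `c+1, …, n` and columns `1, …, n-c`, viewed over `B[t]`.  Here `m = n - c`. -/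
def MmatB (c : ℕ → ℕ) (n m : ℕ) (h : m + c 1 = n) :
    Matrix (Fin m) (Fin m) (Polynomial (Bring n)) :=
  Matrix.of fun i j =>
    Polynomial.C (genXB c n (Fin.cast h (i.addNat (c 1)))
        (Fin.castLE (le_trans (Nat.le_add_right m (c 1)) (le_of_eq h)) j))
      + if (Fin.cast h (i.addNat (c 1)) : Fin n)
            = Fin.castLE (le_trans (Nat.le_add_right m (c 1)) (le_of_eq h)) j
        then Polynomial.X else 0

/-!
Let `X` be the full generic matrix and `E = E_{i+1,i}`. Then `D_i X = [E, X]`, and hence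
`D_i (X + t) = [E, X + t]`. When `i ≠ c` and `i ≠ n - c`, cutting out the rows and columns of
`M(t)` turns this into `D_i Y = E' Y - Y E''` with `E'`, `E''` traceless, so Jacobi's formula gives
`D_i (det Y) = (tr E' - tr E'') det Y = 0` for the submatrix `Y` of `X + t`.
Modulo the coordinates of the parabolic, `det Y` is `det M(t)`, and `D_i` preserves the ideal
generated by these coordinates.
-/

section Determinant

variable {k A m n : Type*}

theorem derivation_prod {M ι : Type*} [CommSemiring k] [CommSemiring A] [Algebra k A]
    [AddCommMonoid M] [Module A M] [Module k M] [DecidableEq ι] (d : Derivation k A M)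
    (f : ι → A) (s : Finset ι) : d (∏ i ∈ s, f i) = ∑ i ∈ s, (∏ j ∈ s.erase i, f j) • d (f i) := by
  induction s using Finset.induction_on with
  | empty => simp
  | insert a s ha ih =>
    rw [prod_insert ha, Derivation.leibniz, ih, sum_insert ha, erase_insert ha, add_comm, smul_sum]
    congr 1
    refine sum_congr rfl fun i hi => ?_
    have hne : a ≠ i := fun h => ha (h ▸ hi)
    rw [erase_insert_of_ne hne, prod_insert (by simp [ha]), mul_smul]

theorem submatrix_mul_of_injective {p q r s : Type*} [NonUnitalNonAssocSemiring A] [Fintype m]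
    [Fintype n] (P : Matrix p n A) (Q : Matrix n q A) (f : r → p) (g : s → q) {e : m → n}
    (he : e.Injective) (h : ∀ i j, ∀ l ∉ Set.range e, P (f i) l * Q l (g j) = 0) :
    (P * Q).submatrix f g = P.submatrix f e * Q.submatrix e g := by
  ext i j
  exact (Fintype.sum_of_injective e he _ _ (h i j) fun _ => rfl).symm

theorem trace_submatrix_single_of_ne [AddCommMonoid A] [Fintype m] [DecidableEq n] {u v : n}
    (h : u ≠ v) (a : A) (e : m → n) : ((Matrix.single v u a).submatrix e e).trace = 0 :=
  sum_eq_zero fun _ _ => Matrix.single_apply_of_ne _ _ _ _ _ fun hi => h (hi.2.trans hi.1.symm)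

variable [CommSemiring k] [CommRing A] [Algebra k A]
  [Fintype m] [DecidableEq m] [Fintype n] [DecidableEq n]

theorem derivation_det_eq_sum_det_updateCol (d : Derivation k A A) (M : Matrix n n A) :
    d M.det = ∑ i, (M.updateCol i fun r => d (M r i)).det := by
  simp only [Matrix.det_apply]
  rw [map_sum, sum_comm]
  refine sum_congr rfl fun σ _ => ?_
  rw [← smul_sum, Units.smul_def, map_zsmul, Units.smul_def, derivation_prod]
  congr 1
  refine sum_congr rfl fun i _ => ?_
  rw [← prod_erase_mul _ _ (mem_univ i), Matrix.updateCol_self, smul_eq_mul]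
  congr 1
  exact prod_congr rfl fun j hj => by rw [Matrix.updateCol_ne (ne_of_mem_erase hj)]

theorem derivation_det_eq_trace_adjugate_mul (d : Derivation k A A) (M : Matrix n n A) :
    d M.det = (M.adjugate * M.map d).trace := by
  rw [derivation_det_eq_sum_det_updateCol, Matrix.trace]
  refine sum_congr rfl fun i _ => ?_
  rw [← Matrix.cramer_apply, Matrix.cramer_eq_adjugate_mulVec]
  rfl

theorem derivation_det_of_map_eq_mul_sub_mul (d : Derivation k A A) {M E F : Matrix n n A}
    (h : M.map d = E * M - M * F) : d M.det = (E.trace - F.trace) * M.det := by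
  have hE : (M.adjugate * (E * M)).trace = E.trace * M.det := by
    rw [Matrix.trace_mul_comm, Matrix.mul_assoc, Matrix.mul_adjugate]
    simp [mul_comm]
  have hF : (M.adjugate * (M * F)).trace = F.trace * M.det := by
    rw [← Matrix.mul_assoc, Matrix.adjugate_mul]
    simp [mul_comm]
  rw [derivation_det_eq_trace_adjugate_mul, h, Matrix.mul_sub, Matrix.trace_sub, hE, hF, sub_mul]

/-- The hypotheses on the ranges say that the row operation adding row `u` to row `v`, and the
column operation subtracting column `v` from column `u`, restrict to the submatrix. -/
theorem derivation_det_submatrix_eq_zero (d : Derivation k A A) {Y : Matrix n n A} {u v : n}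
    {a : A} (huv : u ≠ v) (hY : Y.map d = ⁅Matrix.single v u a, Y⁆) {f g : m → n}
    (hf : f.Injective) (hg : g.Injective) (hfr : v ∈ Set.range f → u ∈ Set.range f)
    (hgr : u ∈ Set.range g → v ∈ Set.range g) : d (Y.submatrix f g).det = 0 := by
  set E := Matrix.single v u a
  have hrow : (E * Y).submatrix f g = E.submatrix f f * Y.submatrix f g := by
    refine submatrix_mul_of_injective _ _ _ _ hf fun i j l hl => ?_
    have hE : E (f i) l = 0 :=
      Matrix.single_apply_of_ne _ _ _ _ _ fun h => hl (h.2 ▸ hfr ⟨i, h.1.symm⟩)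
    rw [hE, zero_mul]
  have hcol : (Y * E).submatrix f g = Y.submatrix f g * E.submatrix g g := by
    refine submatrix_mul_of_injective _ _ _ _ hg fun i j l hl => ?_
    have hE : E l (g j) = 0 :=
      Matrix.single_apply_of_ne _ _ _ _ _ fun h => hl (h.1 ▸ hgr ⟨j, h.2.symm⟩)
    rw [hE, mul_zero]
  have hsub : (Y.submatrix f g).map d
      = E.submatrix f f * Y.submatrix f g - Y.submatrix f g * E.submatrix g g := by
    rw [← Matrix.submatrix_map, hY, Ring.lie_def, ← hrow, ← hcol]
    rfl
  rw [derivation_det_of_map_eq_mul_sub_mul d hsub, trace_submatrix_single_of_ne huv,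
    trace_submatrix_single_of_ne huv, sub_zero, zero_mul]

theorem det_sub_det_mem {J : Ideal A} {M N : Matrix n n A} (h : ∀ i j, M i j - N i j ∈ J) :
    M.det - N.det ∈ J := by
  rw [← Ideal.Quotient.mk_eq_mk_iff_sub_mem, RingHom.map_det, RingHom.map_det]
  congr 1
  ext i j
  exact (Ideal.Quotient.mk_eq_mk_iff_sub_mem _ _).2 (h i j)

end Determinant

section Polynomial

variable {k R n : Type*} [CommRing k] [CommRing R] [Algebra k R]

/-- The extension of a derivation `D` of `R` to `R[t]` that acts on each coefficient. It is the
derivation `Derivation.mapCoeffs`, with its values moved from `PolynomialModule R R` to `R[t]`. -/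
def coeffDerivation (D : Derivation k R R) : Derivation k (Polynomial R) (Polynomial R) :=
  (PolynomialModule.equivPolynomialSelf (R := R)).toLinearMap.compDer D.mapCoeffs

theorem coeff_coeffDerivation (D : Derivation k R R) (q : Polynomial R) (i : ℕ) :
    (coeffDerivation D q).coeff i = D (q.coeff i) :=
  rfl

theorem coeffDerivation_C (D : Derivation k R R) (a : R) :
    coeffDerivation D (Polynomial.C a) = Polynomial.C (D a) := by
  ext i
  simp [coeff_coeffDerivation, Polynomial.coeff_C, apply_ite D]

theorem coeffDerivation_X (D : Derivation k R R) :
    coeffDerivation D Polynomial.X = 0 := by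
  ext i
  simp [coeff_coeffDerivation, Polynomial.coeff_X, apply_ite D]

theorem coeffDerivation_eq_sum (D : Derivation k R R) (q : Polynomial R) :
    coeffDerivation D q = q.sum fun i a => Polynomial.C (D a) * Polynomial.X ^ i := by
  conv_lhs => rw [q.as_sum_support_C_mul_X_pow, map_sum]
  refine sum_congr rfl fun i _ => ?_
  rw [Derivation.leibniz, Derivation.leibniz_pow, coeffDerivation_C, coeffDerivation_X,
    smul_zero, smul_zero, smul_zero, zero_add, smul_eq_mul, mul_comm]

theorem coeffDerivation_mem_map_C {D : Derivation k R R} {I : Ideal R}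
    (hI : ∀ a ∈ I, D a ∈ I) {q : Polynomial R} (hq : q ∈ I.map Polynomial.C) :
    coeffDerivation D q ∈ I.map Polynomial.C :=
  Ideal.mem_map_C_iff.2 fun i => hI _ (Ideal.mem_map_C_iff.1 hq i)

variable [Fintype n] [DecidableEq n]

/-- The linear pencil `A + t · Id` over `R[t]`. -/
def linearPencil (A : Matrix n n R) : Matrix n n (Polynomial R) :=
  A.map Polynomial.C + Matrix.scalar n Polynomial.X

theorem linearPencil_sub_linearPencil_apply (A B : Matrix n n R) (i j : n) :
    linearPencil A i j - linearPencil B i j = Polynomial.C (A i j - B i j) := by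
  simp [linearPencil]

theorem map_coeffDerivation_linearPencil (D : Derivation k R R) {A E : Matrix n n R}
    (h : A.map D = ⁅E, A⁆) :
    (linearPencil A).map (coeffDerivation D) = ⁅E.map Polynomial.C, linearPencil A⁆ := by
  have hconst : (linearPencil A).map (coeffDerivation D) = (A.map D).map Polynomial.C := by
    ext1 i j
    simp [linearPencil, Matrix.diagonal_apply, apply_ite (coeffDerivation D), coeffDerivation_C,
      coeffDerivation_X]
  have hscalar : Commute (E.map Polynomial.C) (Matrix.scalar n Polynomial.X) :=
    (Matrix.scalar_commute _ (fun _ => Commute.all _ _) _).symm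
  rw [hconst, h, linearPencil, Ring.lie_def, Ring.lie_def, Matrix.map_sub _ (map_sub _),
    Matrix.map_mul, Matrix.map_mul, mul_add, add_mul, hscalar.eq, add_sub_add_right_eq_sub]

end Polynomial

section ParabolicIdeal

variable (R : Type*) {n ι : Type*} [CommSemiring R] [LE ι]

/-- The ideal generated by the coordinates `x_{rs}` with `b r ≤ b s`: those of the parabolic
subalgebra attached to a partition of the indices into blocks, where `b` gives the block of an
index. -/
def parabolicIdeal (b : n → ι) : Ideal (MvPolynomial (n × n) R) :=
  Ideal.span (X '' {x : n × n | b x.1 ≤ b x.2})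

variable {R}

theorem X_mem_parabolicIdeal {b : n → ι} {r s : n} (h : b r ≤ b s) :
    X (r, s) ∈ parabolicIdeal R b :=
  Ideal.subset_span ⟨(r, s), h, rfl⟩

theorem map_C_parabolicIdeal (b : n → ι) :
    (parabolicIdeal R b).map Polynomial.C =
      Ideal.span {q | ∃ r s : n, b r ≤ b s ∧ q = Polynomial.C (X (r, s))} := by
  rw [parabolicIdeal, Ideal.map_span, Set.image_image]
  congr 1
  ext q
  simp [eq_comm]

end ParabolicIdeal

section CoordPoissonBracket

variable (R : Type*) {n ι : Type*} [CommRing R] [DecidableEq n]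

/-- The Poisson bracket with the coordinate function `x_{uv}` on `gl_n`, as a derivation. -/
def coordPoissonBracket (u v : n) :
    Derivation R (MvPolynomial (n × n) R) (MvPolynomial (n × n) R) :=
  mkDerivation R fun x =>
    (if x.1 = v then X (u, x.2) else 0) - (if x.2 = u then X (x.1, v) else 0)

theorem coordPoissonBracket_X (u v r s : n) :
    coordPoissonBracket R u v (X (r, s)) =
      (if r = v then X (u, s) else 0) - (if s = u then X (r, v) else 0) :=
  mkDerivation_X _ _ _

theorem map_coordPoissonBracket_mvPolynomialX [Fintype n] (u v : n) :
    (Matrix.mvPolynomialX n n R).map (coordPoissonBracket R u v) =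
      ⁅Matrix.single v u (1 : MvPolynomial (n × n) R), Matrix.mvPolynomialX n n R⁆ := by
  ext1 r s
  simp [Ring.lie_def, Matrix.mul_apply, Matrix.single_apply, coordPoissonBracket_X, ite_and,
    eq_comm]

variable {R}

theorem coordPoissonBracket_mem_parabolicIdeal [Preorder ι] {b : n → ι} {u v : n} (huv : b u ≤ b v)
    {q : MvPolynomial (n × n) R} (hq : q ∈ parabolicIdeal R b) :
    coordPoissonBracket R u v q ∈ parabolicIdeal R b := by
  induction hq using Submodule.span_induction with
  | mem _ hx =>
    obtain ⟨⟨r, s⟩, hrs, rfl⟩ := hx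
    rw [coordPoissonBracket_X]
    refine sub_mem ?_ ?_ <;> split_ifs with h
    · exact X_mem_parabolicIdeal (huv.trans (h ▸ hrs))
    · exact zero_mem _
    · exact X_mem_parabolicIdeal (le_trans (h ▸ hrs) huv)
    · exact zero_mem _
  | zero => simp
  | add x y _ _ hx hy => simpa using add_mem hx hy
  | smul a x hx hDx =>
    rw [smul_eq_mul, Derivation.leibniz]
    exact add_mem (Ideal.mul_mem_left _ _ hDx) (Ideal.mul_mem_right _ _ hx)

end CoordPoissonBracket

section GenericNilradical

variable (R : Type*) {n ι : Type*} [CommRing R] [LinearOrder ι]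

/-- The generic matrix of the nilradical opposite to the parabolic subalgebra with block
function `b`. -/
def genericNilradical (b : n → ι) : Matrix n n (MvPolynomial (n × n) R) :=
  Matrix.of fun r s => if b s < b r then X (r, s) else 0

variable {R}

theorem genericNilradical_sub_mvPolynomialX_mem (b : n → ι) (r s : n) :
    genericNilradical R b r s - Matrix.mvPolynomialX n n R r s ∈ parabolicIdeal R b := by
  by_cases h : b s < b r
  · simp [genericNilradical, h]
  · simpa [genericNilradical, h] using X_mem_parabolicIdeal (not_lt.1 h)

theorem coeffDerivation_det_submatrix_linearPencil_mem {m : Type*} [Fintype m] [DecidableEq m]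
    [Fintype n] [DecidableEq n] {b : n → ι} {u v : n} (huv : u ≠ v) (hb : b u ≤ b v) {f g : m → n}
    (hf : f.Injective) (hg : g.Injective) (hfr : v ∈ Set.range f → u ∈ Set.range f)
    (hgr : u ∈ Set.range g → v ∈ Set.range g) :
    coeffDerivation (coordPoissonBracket R u v)
        ((linearPencil (genericNilradical R b)).submatrix f g).det ∈
      (parabolicIdeal R b).map Polynomial.C := by
  set d := coeffDerivation (coordPoissonBracket R u v)
  set N := (linearPencil (genericNilradical R b)).submatrix f g
  set Y := (linearPencil (Matrix.mvPolynomialX n n R)).submatrix f g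
  have hY : d Y.det = 0 := by
    refine derivation_det_submatrix_eq_zero d huv (a := Polynomial.C 1) ?_ hf hg hfr hgr
    rw [map_coeffDerivation_linearPencil _ (map_coordPoissonBracket_mvPolynomialX R u v),
      Matrix.map_single]
  have hNY : N.det - Y.det ∈ (parabolicIdeal R b).map Polynomial.C := det_sub_det_mem fun i j => by
    simp only [N, Y, Matrix.submatrix_apply, linearPencil_sub_linearPencil_apply]
    exact Ideal.mem_map_of_mem _ (genericNilradical_sub_mvPolynomialX_mem b _ _)
  have hd := coeffDerivation_mem_map_C
    (fun _ => coordPoissonBracket_mem_parabolicIdeal hb) hNY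
  rwa [map_sub, hY, sub_zero] at hd

end GenericNilradical

theorem blk_le_blk {c : ℕ → ℕ} {l a b : ℕ} (hab : a ≤ b) (hb : b ≤ blkSum c l) :
    blk c a ≤ blk c b :=
  Nat.sInf_le (hab.trans (Nat.sInf_mem (s := {j | b ≤ blkSum c j}) ⟨l, hb⟩))

theorem MmatB_eq_submatrix_linearPencil (c : ℕ → ℕ) (n m : ℕ) (hm : m + c 1 = n) :
    MmatB c n m hm =
      (linearPencil (genericNilradical ℂ fun a : Fin n => blk c (a.1 + 1))).submatrix
        (fun i => Fin.cast hm (i.addNat (c 1))) (Fin.castLE (by omega)) := by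
  ext1 i j
  simp [MmatB, genXB, linearPencil, genericNilradical, Matrix.diagonal_apply]

theorem poisson_bracket_detM_mem_span_general
    (l : ℕ) (c : ℕ → ℕ) (n : ℕ) (hn : n = blkSum c l)
    (m : ℕ) (hm : m + c 1 = n)
    (p : ℕ) (hp1 : 1 ≤ p) (hp2 : p ≤ n - 1) (hpc : p ≠ c 1) (hpnc : p ≠ n - c 1)
    (D : Derivation ℂ (Bring n) (Bring n))
    (hD : ∀ r s : Fin n, D (X (r, s)) =
        (if (r : ℕ) = p then X ((⟨p - 1, by omega⟩ : Fin n), s) else 0)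
          - (if (s : ℕ) + 1 = p then X (r, (⟨p, by omega⟩ : Fin n)) else 0)) :
    ((MmatB c n m hm).det).sum (fun k a => Polynomial.C (D a) * Polynomial.X ^ k) ∈
      Ideal.span {q : Polynomial (Bring n) | ∃ a b : Fin n,
        blk c (a.1 + 1) ≤ blk c (b.1 + 1) ∧ q = Polynomial.C (X (a, b))} := by
  let u : Fin n := ⟨p - 1, by omega⟩
  let v : Fin n := ⟨p, by omega⟩
  have hDuv : D = coordPoissonBracket ℂ u v := derivation_ext fun ⟨r, s⟩ => by
    have hs : (s : ℕ) + 1 = p ↔ s = u := by simp only [Fin.ext_iff, u]; omega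
    simp only [hD, coordPoissonBracket_X, hs, Fin.ext_iff (b := v), u, v]
  have hne : u ≠ v := by simp only [u, v, ne_eq, Fin.mk.injEq]; omega
  have hblk : blk c (u.1 + 1) ≤ blk c (v.1 + 1) :=
    blk_le_blk (l := l) (by simp only [u, v]; omega) (by simp only [v]; omega)
  rw [← coeffDerivation_eq_sum, MmatB_eq_submatrix_linearPencil, hDuv, ← map_C_parabolicIdeal]
  refine coeffDerivation_det_submatrix_linearPencil_mem hne hblk
    (fun i j h => by simpa [Fin.ext_iff] using h) (Fin.castLE_injective _) ?rows ?columns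
  case rows =>
    rintro ⟨i, hi⟩
    have hip : i.1 + c 1 = p := congrArg Fin.val hi
    exact ⟨⟨i - 1, by omega⟩, Fin.ext (by simp only [Fin.val_cast, Fin.val_addNat, u]; omega)⟩
  case columns =>
    rintro ⟨j, hj⟩
    have hjp : j.1 = p - 1 := congrArg Fin.val hj
    exact ⟨⟨p, by omega⟩, rfl⟩

/-- Lemma 3.10: for `i ∈ {1,…,n-1}` with `i ≠ c` and `i ≠ n - c`, the Poisson bracket
`{x_{i,i+1}, det M(t)}` (the derivation `D_i` applied coefficientwise to `det M(t)`) lies in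
the ideal of `B[t]` generated by `det M(t)` and the coordinates of the parabolic `p`. -/
theorem poisson_bracket_detM_mem_span
    (l : ℕ) (hl : 2 ≤ l) (c : ℕ → ℕ) (hc : ∀ i ∈ Finset.Icc 1 l, 0 < c i)
    (hcl : c l = c 1) (n : ℕ) (hn0 : 0 < n) (hn : n = blkSum c l)
    (m : ℕ) (hm : m + c 1 = n)
    (p : ℕ) (hp1 : 1 ≤ p) (hp2 : p ≤ n - 1) (hpc : p ≠ c 1) (hpnc : p ≠ n - c 1)
    (D : Derivation ℂ (Bring n) (Bring n))
    (hD : ∀ r s : Fin n, D (X (r, s)) =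
        (if (r : ℕ) = p then X ((⟨p - 1, by omega⟩ : Fin n), s) else 0)
          - (if (s : ℕ) + 1 = p then X (r, (⟨p, by omega⟩ : Fin n)) else 0)) :
    ((MmatB c n m hm).det).sum (fun k a => Polynomial.C (D a) * Polynomial.X ^ k) ∈
      Ideal.span (insert ((MmatB c n m hm).det)
        {q : Polynomial (Bring n) | ∃ a b : Fin n,
          blk c (a.1 + 1) ≤ blk c (b.1 + 1) ∧ q = Polynomial.C (X (a, b))}) :=
  Ideal.span_mono (Set.subset_insert _ _) <|
    poisson_bracket_detM_mem_span_general l c n hn m hm p hp1 hp2 hpc hpnc D hD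

end
end
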